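/- arXiv:1311.3822 — 4 statements merged into one kernel-verified Lean document; each statement's English description precedes it below -/
import Mathlib

section
/- Let A ⊆ B(H) be a σ-weakly closed unital operator algebra. Then the infinite amplification A^(∞) = {a ⊗ 1 : a ∈ A} acting on H ⊗ ℓ² is reflexive: every operator T on H ⊗ ℓ² leaving invariant every closed A^(∞)-invariant subspace belongs to A^(∞). -/
open scoped InnerProductSpace

/-- the amplification `b ⊗ 1`. -/
noncomputable def ampCLM {H : Type*} [NormedAddCommGroup H] [InnerProductSpace ℂ H]
    (b : H →L[ℂ] H) : lp (fun _ : ℕ => H) 2 →L[ℂ] lp (fun _ : ℕ => H) 2 :=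
  lp.mapCLM 2 (fun _ => b) (norm_nonneg b) (fun _ => le_rfl)

theorem ampCLM_apply {H : Type*} [NormedAddCommGroup H] [InnerProductSpace ℂ H]
    (b : H →L[ℂ] H) (ξ : lp (fun _ : ℕ => H) 2) (i : ℕ) : ampCLM b ξ i = b (ξ i) := rfl

/-- `b ↦ (b ⊗ 1) ξ` as a linear map. -/
noncomputable def ampAt {H : Type*} [NormedAddCommGroup H] [InnerProductSpace ℂ H]
    (ξ : lp (fun _ : ℕ => H) 2) : (H →L[ℂ] H) →ₗ[ℂ] lp (fun _ : ℕ => H) 2 where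
  toFun b := ampCLM b ξ
  map_add' b c := by
    apply lp.ext; funext i; rfl
  map_smul' c b := by
    apply lp.ext; funext i; rfl

/-- finitely many square-summable sequences can be packed into one. -/
theorem exists_pack {H : Type*} [NormedAddCommGroup H] [InnerProductSpace ℂ H]
    {ι : Type*} [Finite ι] [Nonempty ι] (x : ι → lp (fun _ : ℕ => H) 2) :
    ∃ (X : lp (fun _ : ℕ => H) 2) (f : ι → ℕ → ℕ),
      (∀ q, Function.Injective (f q)) ∧ ∀ q i, X (f q i) = x q i := by
  obtain ⟨e⟩ : Nonempty (ι × ℕ ≃ ℕ) := nonempty_equiv_of_countable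
  have hmem : Memℓp (fun k : ℕ => x (e.symm k).1 (e.symm k).2) 2 := by
    apply memℓp_gen
    have h : Summable (fun p : ι × ℕ => ‖x p.1 p.2‖ ^ (2 : ENNReal).toReal) := by
      rw [summable_prod_of_nonneg (fun p => by positivity)]
      refine ⟨fun q => (lp.memℓp (x q)).summable (by norm_num), ?_⟩
      exact Summable.of_finite
    exact e.symm.summable_iff.mpr h
  refine ⟨⟨_, hmem⟩, fun q i => e (q, i), fun q i j hij => ?_, fun q i => ?_⟩
  · simpa using hij
  · change x (e.symm (e (q, i))).1 (e.symm (e (q, i))).2 = x q i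
    rw [e.symm_apply_apply]

theorem norm_le_of_reindex {H : Type*} [NormedAddCommGroup H] [InnerProductSpace ℂ H]
    (w W : lp (fun _ : ℕ => H) 2) (f : ℕ → ℕ) (hf : Function.Injective f)
    (h : ∀ i, W (f i) = w i) : ‖w‖ ≤ ‖W‖ := by
  have h2 : 0 < (2 : ENNReal).toReal := by norm_num
  apply lp.norm_le_of_tsum_le h2 (norm_nonneg W)
  rw [lp.norm_rpow_eq_tsum h2]
  refine Summable.tsum_le_tsum_of_inj f hf (fun _ _ => by positivity) (fun i => by rw [h])
    ((lp.memℓp w).summable h2) ((lp.memℓp W).summable h2)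

/-- a σ-weakly closed unital operator algebra `A ⊆ B(H)` has reflexive
infinite amplification: any operator on `H ⊗ ℓ²` leaving every closed `A^(∞)`-invariant
subspace invariant is itself an amplification `a ⊗ 1` with `a ∈ A`.  σ-weak closedness is
expressed via the seminorms `T ↦ |Σᵢ ⟪T ξᵢ, ηᵢ⟫|` indexed by square-summable sequences. -/
theorem amplification_reflexive
    {H : Type*} [NormedAddCommGroup H] [InnerProductSpace ℂ H] [CompleteSpace H]
    (A : Subalgebra ℂ (H →L[ℂ] H))
    (hA : ∀ T : H →L[ℂ] H,
      (∀ ε > (0 : ℝ), ∀ s : Finset ((lp (fun _ : ℕ => H) 2) × (lp (fun _ : ℕ => H) 2)),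
        ∃ a ∈ A, ∀ q ∈ s, ‖∑' i : ℕ, (⟪T (q.1 i) - a (q.1 i), q.2 i⟫_ℂ)‖ < ε) → T ∈ A) :
    ∀ T : lp (fun _ : ℕ => H) 2 →L[ℂ] lp (fun _ : ℕ => H) 2,
      (∀ V : Submodule ℂ (lp (fun _ : ℕ => H) 2), IsClosed (V : Set (lp (fun _ : ℕ => H) 2)) →
        (∀ a ∈ A, ∀ ξ ∈ V, ∀ η : lp (fun _ : ℕ => H) 2, (∀ i, η i = a (ξ i)) → η ∈ V) →
        ∀ ξ ∈ V, T ξ ∈ V) →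
      ∃ a ∈ A, ∀ (ξ : lp (fun _ : ℕ => H) 2) (i : ℕ), (T ξ) i = a (ξ i) := by
  intro T hT
  -- coordinates of `T ξ` depend only on coordinates of `ξ`
  have h1 : ∀ (i : ℕ) (ξ : lp (fun _ : ℕ => H) 2), ξ i = 0 → (T ξ) i = 0 := by
    intro i ξ hξ
    refine hT (LinearMap.ker (lp.evalCLM ℂ (fun _ : ℕ => H) 2 i).toLinearMap)
      (lp.evalCLM ℂ (fun _ : ℕ => H) 2 i).isClosed_ker ?_ ξ hξ
    intro a _ ξ hξ η hη
    change η i = 0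
    have h : ξ i = 0 := hξ
    rw [hη, h, map_zero]
  have h2 : ∀ (i j : ℕ) (ξ : lp (fun _ : ℕ => H) 2), ξ i = ξ j → (T ξ) i = (T ξ) j := by
    intro i j ξ hξ
    have key := hT (LinearMap.ker (lp.evalCLM ℂ (fun _ : ℕ => H) 2 i -
        lp.evalCLM ℂ (fun _ : ℕ => H) 2 j).toLinearMap)
      (lp.evalCLM ℂ (fun _ : ℕ => H) 2 i - lp.evalCLM ℂ (fun _ : ℕ => H) 2 j).isClosed_ker ?_ ξ
      (sub_eq_zero.mpr hξ)
    · exact sub_eq_zero.mp key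
    intro a _ ξ hξ η hη
    have h : ξ i = ξ j := sub_eq_zero.mp hξ
    refine sub_eq_zero.mpr (?_ : η i = η j)
    rw [hη, hη, h]
  have h3 : ∀ (i : ℕ) (ξ ζ : lp (fun _ : ℕ => H) 2), ξ i = ζ i → (T ξ) i = (T ζ) i := by
    intro i ξ ζ h
    have := h1 i (ξ - ζ) (sub_eq_zero.mpr h)
    rw [map_sub] at this
    exact sub_eq_zero.mp this
  let a : H →L[ℂ] H := (lp.evalCLM ℂ (fun _ : ℕ => H) 2 0).comp
    (T.comp (lp.singleContinuousLinearMap ℂ (fun _ : ℕ => H) 2 0))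
  have ha : ∀ x, a x = (T (lp.single 2 0 x)) 0 := fun x => rfl
  have hTa : ∀ (ξ : lp (fun _ : ℕ => H) 2) (i : ℕ), (T ξ) i = a (ξ i) := by
    intro ξ i
    rw [ha]
    by_cases hi : i = 0
    · subst hi
      exact h3 0 _ _ (lp.single_apply_self (E := fun _ : ℕ => H) 2 0 (ξ 0)).symm
    · let ζ : lp (fun _ : ℕ => H) 2 := lp.single 2 0 (ξ i) + lp.single 2 i (ξ i)
      have z0 : ζ 0 = ξ i := by
        change lp.single (E := fun _ : ℕ => H) 2 0 (ξ i) 0 +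
          lp.single (E := fun _ : ℕ => H) 2 i (ξ i) 0 = ξ i
        rw [lp.single_apply_self, lp.single_apply_ne _ _ _ (Ne.symm hi), add_zero]
      have zi : ζ i = ξ i := by
        change lp.single (E := fun _ : ℕ => H) 2 0 (ξ i) i +
          lp.single (E := fun _ : ℕ => H) 2 i (ξ i) i = ξ i
        rw [lp.single_apply_self, lp.single_apply_ne _ _ _ hi, zero_add]
      rw [h3 i ξ ζ zi.symm, h2 i 0 ζ (zi.trans z0.symm)]
      exact h3 0 _ _ (z0.trans (lp.single_apply_self (E := fun _ : ℕ => H) 2 0 (ξ i)).symm)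
  refine ⟨a, hA a ?_, hTa⟩
  intro ε hε s
  rcases s.eq_empty_or_nonempty with rfl | hs
  · exact ⟨0, A.zero_mem, by simp⟩
  have : Nonempty s := hs.to_subtype
  obtain ⟨X, f, hf, hX⟩ := exists_pack (fun q : s => q.1.1)
  -- the cyclic subspace generated by `X`
  let V : Submodule ℂ (lp (fun _ : ℕ => H) 2) :=
    ((Subalgebra.toSubmodule A).map (ampAt X)).topologicalClosure
  have hTX : T X ∈ V := by
    refine hT V (Submodule.isClosed_topologicalClosure _) ?_ X ?_
    · intro c hc ξ hξ η hη
      have hηc : η = ampCLM c ξ := by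
        apply lp.ext; funext i; rw [hη, ampCLM_apply]
      rw [hηc]
      refine map_mem_closure (ampCLM c).continuous hξ ?_
      rintro _ ⟨b, hb, rfl⟩
      exact ⟨c * b, A.mul_mem hc hb, rfl⟩
    · exact subset_closure ⟨1, A.one_mem, rfl⟩
  obtain ⟨M, hM0, hM⟩ : ∃ M : ℝ, 0 < M ∧ ∀ q ∈ s, ‖q.2‖ < M := by
    refine ⟨∑ q ∈ s, ‖q.2‖ + 1, by positivity, fun q hq => ?_⟩
    have := Finset.single_le_sum (f := fun q : (lp (fun _ : ℕ => H) 2) ×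
      (lp (fun _ : ℕ => H) 2) => ‖q.2‖) (fun _ _ => norm_nonneg _) hq
    linarith
  obtain ⟨_, ⟨b, hb, rfl⟩, hdist⟩ := Metric.mem_closure_iff.mp hTX (ε / M) (by positivity)
  refine ⟨b, hb, fun q hq => ?_⟩
  let w : lp (fun _ : ℕ => H) 2 := ampCLM (a - b) q.1
  have hw : ‖w‖ < ε / M := by
    rw [dist_eq_norm] at hdist
    refine (norm_le_of_reindex w _ (f ⟨q, hq⟩) (hf _) fun i => ?_).trans_lt hdist
    change (T X) (f ⟨q, hq⟩ i) - b (X (f ⟨q, hq⟩ i)) = a (q.1 i) - b (q.1 i)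
    rw [hTa, hX]
  calc ‖∑' i : ℕ, (⟪a (q.1 i) - b (q.1 i), q.2 i⟫_ℂ)‖ = ‖⟪w, q.2⟫_ℂ‖ := by
        rw [lp.inner_eq_tsum]; rfl
    _ ≤ ‖w‖ * ‖q.2‖ := norm_inner_le_norm _ _
    _ ≤ ‖w‖ * M := by gcongr; exact (hM q hq).le
    _ < ε / M * M := by gcongr
    _ = ε := by field_simp
end

section
/- Let A be a C*-algebra with the total reduction property. Then A has the similarity property: every continuous representation θ : A → B(H) is similar to a *-representation, i.e. there exists an invertible S ∈ B(H) such that a ↦ Sθ(a)S⁻¹ is a *-homomorphism. -/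
set_option linter.unusedSectionVars false
set_option linter.unusedSimpArgs false

namespace TRP
open scoped ComplexOrder InnerProductSpace

section Groth
variable {A : Type*} [CStarAlgebra A] [PartialOrder A] [StarOrderedRing A]

/-- Cauchy-Schwarz for columns in a C*-algebra. -/
lemma norm_cs {ι : Type*} [Fintype ι] (p q : ι → A) :
    ‖∑ i, star (p i) * q i‖ ^ 2 ≤ ‖∑ i, star (p i) * p i‖ * ‖∑ i, star (q i) * q i‖ := by
  let x : WithCStarModule A (ι → A) := (WithCStarModule.equiv A (ι → A)).symm (fun i => star (q i))
  let y : WithCStarModule A (ι → A) := (WithCStarModule.equiv A (ι → A)).symm (fun i => star (p i))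
  have h := CStarModule.norm_inner_le (A := A) (WithCStarModule A (ι → A)) (x := x) (y := y)
  have h1 : inner A x y = ∑ i, star (p i) * q i := by
    rw [WithCStarModule.pi_inner]
    simp [x, y, WithCStarModule.inner_def]
  have hx : ‖x‖ ^ 2 = ‖∑ i, star (q i) * q i‖ := by
    rw [WithCStarModule.pi_norm_sq]
    simp [x, WithCStarModule.inner_def]
  have hy : ‖y‖ ^ 2 = ‖∑ i, star (p i) * p i‖ := by
    rw [WithCStarModule.pi_norm_sq]
    simp [y, WithCStarModule.inner_def]
  rw [h1] at h
  rw [← hx, ← hy, mul_comm, ← mul_pow]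
  exact pow_le_pow_left₀ (norm_nonneg _) h 2

/-- sign of a boolean -/
def sg (b : Bool) : ℝ := if b then 1 else -1

lemma sg_not (b : Bool) : sg (!b) = - sg b := by cases b <;> simp [sg]
lemma sg_sq (b : Bool) : sg b * sg b = 1 := by cases b <;> simp [sg]

section signs
variable {ι : Type} [Fintype ι] [DecidableEq ι]

def flip (i : ι) : (ι → Bool) ≃ (ι → Bool) where
  toFun e := Function.update e i (!(e i))
  invFun e := Function.update e i (!(e i))
  left_inv e := by simp
  right_inv e := by simp

lemma flip_same (i : ι) (e : ι → Bool) : sg (flip i e i) = - sg (e i) := by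
  simp [flip, sg_not]

lemma flip_ne (i : ι) (e : ι → Bool) {j : ι} (h : j ≠ i) : flip i e j = e j := by
  simp [flip, h]

lemma sum_flip_zero (i : ι) (F : (ι → Bool) → ℝ) (h : ∀ e, F (flip i e) = - F e) :
    ∑ e, F e = 0 := by
  have := (flip i).sum_comp F
  simp only [h, Finset.sum_neg_distrib] at this
  linarith

lemma sum_two (i j : ι) : ∑ e : ι → Bool, sg (e i) * sg (e j)
    = if i = j then (Fintype.card (ι → Bool) : ℝ) else 0 := by
  split_ifs with h
  · subst h; simp [sg_sq]
  · apply sum_flip_zero i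
    intro e
    rw [flip_same, flip_ne i e (Ne.symm h)]; ring

lemma sum_four (i j k l : ι) : ∑ e : ι → Bool, sg (e i) * sg (e j) * sg (e k) * sg (e l)
    = (Fintype.card (ι → Bool) : ℝ) * ((if i = j ∧ k = l then 1 else 0)
      + (if i = k ∧ j = l then 1 else 0) + (if i = l ∧ j = k then 1 else 0)
      - 2 * (if i = j ∧ j = k ∧ k = l then 1 else 0)) := by
  by_cases hij : i = j
  · subst hij
    have : ∀ e : ι → Bool, sg (e i) * sg (e i) * sg (e k) * sg (e l) = sg (e k) * sg (e l) := by
      intro e; rw [sg_sq, one_mul]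
    simp only [this, sum_two]
    by_cases hkl : k = l
    · subst hkl; by_cases hik : i = k <;> simp [hik]; norm_num
    · by_cases hik : i = k <;> by_cases hil : i = l <;> simp_all
  · by_cases hik : i = k
    · subst hik
      have : ∀ e : ι → Bool, sg (e i) * sg (e j) * sg (e i) * sg (e l) = sg (e j) * sg (e l) := by
        intro e
        calc _ = (sg (e i) * sg (e i)) * (sg (e j) * sg (e l)) := by ring
          _ = _ := by rw [sg_sq, one_mul]
      simp only [this, sum_two]
      by_cases hjl : j = l
      · subst hjl; simp [hij, Ne.symm hij]
      · have : ¬ j = i := fun h => hij h.symm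
        by_cases hil : i = l <;> simp_all
    · by_cases hil : i = l
      · subst hil
        have : ∀ e : ι → Bool, sg (e i) * sg (e j) * sg (e k) * sg (e i) = sg (e j) * sg (e k) := by
          intro e
          calc _ = (sg (e i) * sg (e i)) * (sg (e j) * sg (e k)) := by ring
            _ = _ := by rw [sg_sq, one_mul]
        simp only [this, sum_two]
        by_cases hjk : j = k <;> simp_all
      · rw [sum_flip_zero i]
        · simp [hij, hik, hil]
        · intro e
          rw [flip_same, flip_ne i e (Ne.symm hij), flip_ne i e (Ne.symm hik),
            flip_ne i e (Ne.symm hil)]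
          ring

/-- random sum -/
def rs {E : Type*} [AddCommGroup E] [Module ℝ E] (h : ι → E) (e : ι → Bool) : E :=
  ∑ i, sg (e i) • h i

lemma rs_norm_sq {E : Type*} [NormedAddCommGroup E] [InnerProductSpace ℂ E] (y : ι → E) :
    ∑ e : ι → Bool, ‖rs y e‖ ^ 2 = (Fintype.card (ι → Bool) : ℝ) * ∑ i, ‖y i‖ ^ 2 := by
  have h1 : ∀ e : ι → Bool, ‖rs y e‖ ^ 2
      = ∑ i, ∑ j, (sg (e i) * sg (e j)) * RCLike.re (inner ℂ (y i) (y j)) := by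
    intro e
    rw [@norm_sq_eq_re_inner ℂ, rs, sum_inner, map_sum]
    refine Finset.sum_congr rfl fun i _ => ?_
    rw [inner_sum, map_sum]
    refine Finset.sum_congr rfl fun j _ => ?_
    rw [← Complex.coe_smul, ← Complex.coe_smul, inner_smul_left, inner_smul_right]
    simp [mul_assoc]
  simp only [h1]
  rw [Finset.sum_comm]
  rw [Finset.mul_sum]
  refine Finset.sum_congr rfl fun i _ => ?_
  rw [Finset.sum_comm]
  simp only [← Finset.sum_mul, sum_two]
  simp [@norm_sq_eq_re_inner ℂ]

lemma rs_four (h : ι → A) :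
    ∑ e : ι → Bool, rs h e * rs h e * rs h e * rs h e
    = (Fintype.card (ι → Bool) : ℝ) • ((∑ i, h i * h i) * (∑ i, h i * h i)
      + ∑ i, ∑ j, h i * h j * h i * h j + ∑ i, ∑ j, h i * h j * h j * h i
      - (2 : ℝ) • ∑ i, h i * h i * h i * h i) := by
  have h1 : ∀ e : ι → Bool, rs h e * rs h e * rs h e * rs h e
      = ∑ i, ∑ j, ∑ k, ∑ l, (sg (e i) * sg (e j) * sg (e k) * sg (e l)) • (h i * h j * h k * h l) := by
    intro e
    have : ∀ i j k l, (sg (e i) * sg (e j) * sg (e k) * sg (e l)) • (h i * h j * h k * h l)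
        = (sg (e i) • h i) * (sg (e j) • h j) * (sg (e k) • h k) * (sg (e l) • h l) := by
      intro i j k l
      simp only [smul_mul_smul_comm]
    simp only [this, ← Finset.mul_sum, ← Finset.sum_mul, rs]
  simp only [h1]
  have h2 : ∑ e : ι → Bool, ∑ i, ∑ j, ∑ k, ∑ l, (sg (e i) * sg (e j) * sg (e k) * sg (e l)) • (h i * h j * h k * h l) = ∑ i, ∑ j, ∑ k, ∑ l, (∑ e : ι → Bool, sg (e i) * sg (e j) * sg (e k) * sg (e l)) • (h i * h j * h k * h l) := by
    simp only [Finset.sum_smul]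
    rw [Finset.sum_comm]
    refine Finset.sum_congr rfl fun i _ => ?_
    rw [Finset.sum_comm]
    refine Finset.sum_congr rfl fun j _ => ?_
    rw [Finset.sum_comm]
    refine Finset.sum_congr rfl fun k _ => ?_
    rw [Finset.sum_comm]
  rw [h2]
  simp only [sum_four, mul_smul, ← Finset.smul_sum]
  congr 1
  simp only [add_smul, sub_smul, Finset.sum_add_distrib, Finset.sum_sub_distrib, ite_and, mul_smul,
    ← Finset.smul_sum, Finset.sum_mul_sum, ite_smul, one_smul, zero_smul]
  simp [mul_assoc]

end signs
end Groth
end TRP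

set_option linter.unusedSectionVars false
set_option linter.unusedSimpArgs false

namespace TRP
open scoped ComplexOrder InnerProductSpace

section Groth2
variable {A : Type*} [CStarAlgebra A] [PartialOrder A] [StarOrderedRing A]

lemma sa_sq_nonneg {x : A} (hx : IsSelfAdjoint x) : 0 ≤ x * x := by
  have := star_mul_self_nonneg x
  rwa [hx.star_eq] at this

lemma rs_sa {ι : Type} [Fintype ι] (h : ι → A) (hs : ∀ i, IsSelfAdjoint (h i)) (e : ι → Bool) :
    IsSelfAdjoint (rs h e) := by
  unfold rs
  rw [IsSelfAdjoint, star_sum]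
  refine Finset.sum_congr rfl fun i _ => ?_
  rw [star_smul, (hs i).star_eq]; simp

lemma rs_four_le {ι : Type} [Fintype ι] [DecidableEq ι] (h : ι → A) (hs : ∀ i, IsSelfAdjoint (h i))
    (h1 : ‖∑ i, h i * h i‖ ≤ 1) :
    ‖∑ e : ι → Bool, rs h e * rs h e * rs h e * rs h e‖ ≤ 3 * (Fintype.card (ι → Bool) : ℝ) := by
  have hS0 : 0 ≤ ∑ i, h i * h i := Finset.sum_nonneg fun i _ => sa_sq_nonneg (hs i)
  have hS1 : ∑ i, h i * h i ≤ 1 := (CStarAlgebra.norm_le_one_iff_of_nonneg _ hS0).1 h1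
  set N : ℝ := (Fintype.card (ι → Bool) : ℝ)
  set Y : A := (∑ i, h i * h i) * (∑ i, h i * h i)
      + ∑ i, ∑ j, h i * h j * h i * h j + ∑ i, ∑ j, h i * h j * h j * h i with hY
  -- third term
  have t3n : 0 ≤ ∑ i, ∑ j, h i * h j * h j * h i := by
    refine Finset.sum_nonneg fun i _ => Finset.sum_nonneg fun j _ => ?_
    have := star_mul_self_nonneg (h j * h i)
    simpa [(hs _).star_eq, mul_assoc] using this
  have t3le : ∑ i, ∑ j, h i * h j * h j * h i ≤ 1 := by
    refine le_trans (Finset.sum_le_sum fun i _ => ?_) hS1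
    have := star_left_conjugate_le_conjugate hS1 (h i)
    simpa [(hs _).star_eq, mul_assoc, Finset.mul_sum, Finset.sum_mul] using this
  have t3 : ‖∑ i, ∑ j, h i * h j * h j * h i‖ ≤ 1 :=
    (CStarAlgebra.norm_le_one_iff_of_nonneg _ t3n).2 t3le
  have t1 : ‖(∑ i, h i * h i) * (∑ i, h i * h i)‖ ≤ 1 :=
    (norm_mul_le _ _).trans (mul_le_one₀ h1 (norm_nonneg _) h1)
  have t2 : ‖∑ i, ∑ j, h i * h j * h i * h j‖ ≤ 1 := by
    have := norm_cs (ι := ι × ι) (fun p => h p.2 * h p.1) (fun p => h p.1 * h p.2)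
    simp only [star_mul, (hs _).star_eq, Fintype.sum_prod_type] at this
    have e1 : ∑ i, ∑ j, h i * h j * (h j * h i) = ∑ i, ∑ j, h i * h j * h j * h i := by
      simp [mul_assoc]
    have e2 : ∑ i, ∑ j, h j * h i * (h i * h j) = ∑ i, ∑ j, h i * h j * h j * h i := by
      rw [Finset.sum_comm]; simp [mul_assoc]
    have e3 : ∑ i, ∑ j, h i * h j * (h i * h j) = ∑ i, ∑ j, h i * h j * h i * h j := by
      simp [mul_assoc]
    rw [e1, e2, e3] at this
    have h' := mul_le_one₀ t3 (norm_nonneg _) t3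
    nlinarith [norm_nonneg (∑ i, ∑ j, h i * h j * h i * h j)]
  have hYn : ‖Y‖ ≤ 3 := by
    rw [hY]
    refine (norm_add₃_le).trans ?_
    linarith
  have h4 : 0 ≤ ∑ i, h i * h i * h i * h i := by
    refine Finset.sum_nonneg fun i _ => ?_
    have := star_mul_self_nonneg (h i * h i)
    simpa [(hs _).star_eq, mul_assoc] using this
  have hX0 : 0 ≤ ∑ e : ι → Bool, rs h e * rs h e * rs h e * rs h e := by
    refine Finset.sum_nonneg fun e _ => ?_
    have := star_mul_self_nonneg (rs h e * rs h e)
    simpa [(rs_sa h hs e).star_eq, mul_assoc] using this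
  have hXY : ∑ e : ι → Bool, rs h e * rs h e * rs h e * rs h e ≤ N • Y := by
    rw [rs_four]
    apply smul_le_smul_of_nonneg_left _ (by positivity)
    exact sub_le_self _ (smul_nonneg (by norm_num) h4)
  refine (CStarAlgebra.norm_le_norm_of_nonneg_of_le hX0 hXY).trans ?_
  rw [norm_smul, Real.norm_of_nonneg (by positivity), mul_comm]
  gcongr

def GB {E : Type*} [NormedAddCommGroup E] [InnerProductSpace ℂ E] (v : A →L[ℂ] E) (K : ℝ) : Prop :=
  ∀ (ι : Type) [Fintype ι] (h : ι → A), (∀ i, IsSelfAdjoint (h i)) →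
    ‖∑ i, h i * h i‖ ≤ 1 → ∑ i, ‖v (h i)‖ ^ 2 ≤ K

lemma clip {x : A} (hx : IsSelfAdjoint x) : ∃ f g : A, IsSelfAdjoint g ∧ x = f + g ∧
    ‖f‖ ^ 2 ≤ 3 / 4 ∧ g * g ≤ (1 / 12 : ℝ) • (x * x * x * x) := by
  set t : ℝ := √3 / 2
  have ht : t ^ 2 = 3 / 4 := by simp only [t, div_pow]; norm_num
  have ht0 : 0 < t := by positivity
  let F : ℝ → ℝ := fun s => max (-t) (min t s)
  have hF : Continuous F := by fun_prop
  refine ⟨cfc F x, cfc (fun s => s - F s) x, cfc_predicate _ _, ?_, ?_, ?_⟩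
  · rw [← cfc_add (a := x) F _ ]
    simp [cfc_id' ℝ x]
  · rw [← ht]
    gcongr
    refine norm_cfc_le ht0.le fun s _ => ?_
    simp only [F, Real.norm_eq_abs, abs_le]
    constructor
    · exact le_max_left _ _
    · exact max_le (by linarith) (min_le_left _ _)
  · have e1 : x * x * x * x = cfc (fun s : ℝ => s ^ 4) x := by
      rw [cfc_pow_id (R := ℝ) x 4]; simp [pow_succ, mul_assoc]
    have e2 : (1 / 12 : ℝ) • cfc (fun s : ℝ => s ^ 4) x = cfc (fun s : ℝ => (1 / 12 : ℝ) • s ^ 4) x := 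
      (cfc_smul (1 / 12 : ℝ) (fun s : ℝ => s ^ 4) x (by fun_prop)).symm
    rw [e1, ← cfc_mul _ _ x (by fun_prop) (by fun_prop), e2]
    refine cfc_mono ?_ (by fun_prop) (by fun_prop)
    intro s _
    simp only [F, smul_eq_mul]
    rcases le_total s (-t) with h | h
    · rw [max_eq_left ((min_le_right _ _).trans h)]
      have h0 : s + t ≤ 0 := by linarith
      have h1 : 0 ≤ (s + 2 * t) ^ 2 := sq_nonneg _
      have h2 : -(s + t) * (4 * t) ≤ s ^ 2 := by nlinarith
      have h3 : (-(s + t) * (4 * t)) ^ 2 ≤ (s ^ 2) ^ 2 := 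
        pow_le_pow_left₀ (by nlinarith) h2 2
      have h4 : (-(s + t) * (4 * t)) ^ 2 = 12 * (s + t)^2 := by
        calc _ = 16 * (s + t)^2 * t ^ 2 := by ring
          _ = _ := by rw [ht]; ring
      nlinarith
    · rcases le_total s t with h' | h'
      · rw [min_eq_right h', max_eq_right h]
        simp; positivity
      · rw [min_eq_left h', max_eq_right (by linarith)]
        have h1 : 0 ≤ (s - 2 * t) ^ 2 := sq_nonneg _
        have h2 : (s - t) * (4 * t) ≤ s ^ 2 := by nlinarith
        have h3 : ((s - t) * (4 * t)) ^ 2 ≤ (s ^ 2) ^ 2 := 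
          pow_le_pow_left₀ (mul_nonneg (by linarith) (by linarith)) h2 2
        have h4 : ((s - t) * (4 * t)) ^ 2 = 12 * (s - t)^2 := by
          calc _ = 16 * (s - t)^2 * t ^ 2 := by ring
            _ = _ := by rw [ht]; ring
        nlinarith

lemma GB_step {E : Type*} [NormedAddCommGroup E] [InnerProductSpace ℂ E] (v : A →L[ℂ] E) (K : ℝ)
    (hK : GB v K) : GB v (3 / 2 * ‖v‖ ^ 2 + K / 2) := by
  classical
  intro ι _ h hs h1
  choose f g hg hfg hf hgle using fun e : ι → Bool => clip (rs_sa h hs e)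
  set N : ℝ := (Fintype.card (ι → Bool) : ℝ) with hN
  have hN0 : 0 < N := by simp only [hN]; exact_mod_cast Fintype.card_pos
  have key := rs_norm_sq (fun i => v (h i))
  have hrs : ∀ e, rs (fun i => v (h i)) e = v (rs h e) := by
    intro e; simp only [rs, map_sum]
    refine Finset.sum_congr rfl fun i _ => ?_
    rw [← Complex.coe_smul, ← Complex.coe_smul, map_smul]
  simp only [hrs] at key
  -- g part
  have hgn : ‖∑ e, g e * g e‖ ≤ N / 4 := by
    have a0 : 0 ≤ ∑ e, g e * g e := Finset.sum_nonneg fun e _ => sa_sq_nonneg (hg e)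
    have a1 : ∑ e, g e * g e ≤ (1 / 12 : ℝ) • ∑ e : ι → Bool, rs h e * rs h e * rs h e * rs h e := by
      rw [Finset.smul_sum]; exact Finset.sum_le_sum fun e _ => hgle e
    refine (CStarAlgebra.norm_le_norm_of_nonneg_of_le a0 a1).trans ?_
    rw [norm_smul, Real.norm_of_nonneg (by norm_num)]
    have := rs_four_le h hs h1
    linarith
  have hgK := hK (ι → Bool) (fun e => (2 / √N) • g e) (fun e => by
      rw [IsSelfAdjoint, star_smul, (hg e).star_eq]; simp)
    (by
      simp only [smul_mul_smul_comm, ← Finset.smul_sum, norm_smul]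
      have : (2 / √N) * (2 / √N) = 4 / N := by
        rw [div_mul_div_comm, Real.mul_self_sqrt hN0.le]; norm_num
      rw [this, Real.norm_of_nonneg (by positivity), div_mul_eq_mul_div, div_le_one hN0]
      linarith)
  have hv : ∀ e, ‖v ((2 / √N) • g e)‖ ^ 2 = 4 / N * ‖v (g e)‖ ^ 2 := by
    intro e
    rw [← Complex.coe_smul, map_smul, norm_smul, mul_pow, Complex.norm_real, 
      Real.norm_of_nonneg (by positivity), div_pow, Real.sq_sqrt hN0.le]; norm_num
  simp only [hv, ← Finset.mul_sum] at hgK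
  have hgK' : 4 * ∑ e, ‖v (g e)‖ ^ 2 ≤ K * N := by
    rw [div_mul_eq_mul_div, div_le_iff₀ hN0] at hgK; exact hgK
  have hfK : ∑ e, ‖v (f e)‖ ^ 2 ≤ N * (3 / 4 * ‖v‖ ^ 2) := by
    have : ∀ e ∈ Finset.univ, ‖v (f e)‖ ^ 2 ≤ 3 / 4 * ‖v‖ ^ 2 := by
      intro e _
      have := pow_le_pow_left₀ (norm_nonneg _) (v.le_opNorm (f e)) 2
      rw [mul_pow] at this
      nlinarith [hf e, sq_nonneg ‖v‖]
    have := Finset.sum_le_card_nsmul _ _ _ this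
    simpa [hN] using this
  have hsum : ∑ e, ‖v (rs h e)‖ ^ 2 ≤ 2 * ∑ e, ‖v (f e)‖ ^ 2 + 2 * ∑ e, ‖v (g e)‖ ^ 2 := by
    rw [Finset.mul_sum, Finset.mul_sum, ← Finset.sum_add_distrib]
    refine Finset.sum_le_sum fun e _ => ?_
    rw [hfg e, map_add]
    have := norm_add_le (v (f e)) (v (g e))
    nlinarith [sq_nonneg (‖v (f e)‖ - ‖v (g e)‖), norm_nonneg (v (f e) + v (g e))]
  rw [key] at hsum
  have : N * ∑ i, ‖v (h i)‖ ^ 2 ≤ N * (3 / 2 * ‖v‖ ^ 2 + K / 2) := by linarith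
  exact le_of_mul_le_mul_left this hN0

lemma GB_functional (f : A →L[ℂ] ℂ) : GB f (‖f‖ ^ 2) := by
  intro ι _ h hs h1
  set s : ℝ := ∑ i, ‖f (h i)‖ ^ 2 with hsdef
  have h0 : 0 ≤ s := Finset.sum_nonneg fun i _ => by positivity
  have e1 : f (∑ i, (star (f (h i))) • h i) = (s : ℂ) := by
    rw [map_sum, hsdef]; push_cast
    refine Finset.sum_congr rfl fun i _ => ?_
    rw [map_smul, smul_eq_mul, ← Complex.conj_mul']; rfl
  have e2 : ‖∑ i, (star (f (h i))) • h i‖ ^ 2 ≤ s := by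
    have := norm_cs (fun i => (f (h i)) • (1 : A)) h
    simp only [star_smul, star_one, smul_mul_assoc, one_mul, (hs _).star_eq] at this
    refine this.trans ?_
    have a : ‖∑ i, star (f (h i)) • f (h i) • (1 : A)‖ ≤ s := by
      refine (norm_sum_le _ _).trans (Finset.sum_le_sum fun i _ => ?_)
      rw [norm_smul, norm_smul, norm_star, ← mul_assoc, ← sq]
      rcases subsingleton_or_nontrivial A with hA | hA
      · rw [Subsingleton.elim (1 : A) 0]; simp
      · rw [CStarRing.norm_one, mul_one]
    calc _ ≤ s * 1 := mul_le_mul a h1 (norm_nonneg _) h0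
      _ = s := mul_one _
  have e3 : s ≤ ‖f‖ * ‖∑ i, (star (f (h i))) • h i‖ := by
    have := f.le_opNorm (∑ i, (star (f (h i))) • h i)
    rwa [e1, Complex.norm_real, Real.norm_of_nonneg h0] at this
  by_cases hz : s = 0
  · rw [hz]; positivity
  have hp : 0 < s := lt_of_le_of_ne h0 (Ne.symm hz)
  have e4 : s ^ 2 ≤ ‖f‖ ^ 2 * s := by
    calc s ^ 2 ≤ (‖f‖ * ‖∑ i, (star (f (h i))) • h i‖) ^ 2 := pow_le_pow_left₀ h0 e3 2
      _ = ‖f‖ ^ 2 * ‖∑ i, (star (f (h i))) • h i‖ ^ 2 := mul_pow _ _ _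
      _ ≤ _ := by gcongr
  nlinarith

lemma GB_findim {E : Type*} [NormedAddCommGroup E] [InnerProductSpace ℂ E] [FiniteDimensional ℂ E]
    (v : A →L[ℂ] E) : ∃ K, GB v K := by
  let b := stdOrthonormalBasis ℂ E
  refine ⟨∑ k, ‖(innerSL ℂ (b k)).comp v‖ ^ 2, ?_⟩
  intro ι _ h hs h1
  have : ∀ i, ‖v (h i)‖ ^ 2 = ∑ k, ‖((innerSL ℂ (b k)).comp v) (h i)‖ ^ 2 := by
    intro i
    rw [← b.sum_sq_norm_inner_right]; rfl
  simp only [this]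
  rw [Finset.sum_comm]
  exact Finset.sum_le_sum fun k _ => GB_functional _ ι h hs h1

lemma GB_findim' {E : Type*} [NormedAddCommGroup E] [InnerProductSpace ℂ E] [FiniteDimensional ℂ E]
    (v : A →L[ℂ] E) : GB v (3 * ‖v‖ ^ 2) := by
  obtain ⟨K, hK⟩ := GB_findim v
  have : ∀ n : ℕ, GB v (3 * ‖v‖ ^ 2 + (K - 3 * ‖v‖ ^ 2) * (1 / 2) ^ n) := by
    intro n
    induction n with
    | zero => simpa using hK
    | succ n ih =>
      convert GB_step v _ ih using 1
      ring
  intro ι _ h hs h1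
  have hl : Filter.Tendsto (fun n : ℕ => 3 * ‖v‖ ^ 2 + (K - 3 * ‖v‖ ^ 2) * (1 / 2 : ℝ) ^ n)
      Filter.atTop (nhds (3 * ‖v‖ ^ 2 + (K - 3 * ‖v‖ ^ 2) * 0)) :=
    ((tendsto_pow_atTop_nhds_zero_of_lt_one (by norm_num) (by norm_num)).const_mul _).const_add _
  rw [mul_zero, add_zero] at hl
  exact ge_of_tendsto' hl fun n => this n ι h hs h1

lemma GB_all {E : Type*} [NormedAddCommGroup E] [InnerProductSpace ℂ E] [CompleteSpace E]
    (v : A →L[ℂ] E) : GB v (3 * ‖v‖ ^ 2) := by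
  intro ι _ h hs h1
  let S : Submodule ℂ E := Submodule.span ℂ (Set.range fun i => v (h i))
  have : FiniteDimensional ℂ S := FiniteDimensional.span_of_finite ℂ (Set.finite_range _)
  let w : A →L[ℂ] S := S.orthogonalProjectionOnto.comp v
  have hw := GB_findim' w ι h hs h1
  have e : ∀ i, ‖w (h i)‖ = ‖v (h i)‖ := by
    intro i
    have : v (h i) ∈ S := Submodule.subset_span ⟨i, rfl⟩
    have h2 := Submodule.orthogonalProjectionOnto_mem_subspace_eq_self (⟨v (h i), this⟩ : S)
    change ‖S.orthogonalProjectionOnto (v (h i))‖ = _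
    rw [show S.orthogonalProjectionOnto (v (h i)) = ⟨v (h i), this⟩ from h2]; rfl
  simp only [e] at hw
  refine hw.trans ?_
  have : ‖w‖ ≤ ‖v‖ := by
    refine (ContinuousLinearMap.opNorm_comp_le _ _).trans ?_
    have := S.orthogonalProjectionOnto_norm_le
    nlinarith [norm_nonneg v]
  gcongr

end Groth2
end TRP

set_option linter.unusedSectionVars false
set_option linter.unusedSimpArgs false
namespace TRP
open scoped ComplexOrder InnerProductSpace

section Col
variable {A : Type*} [CStarAlgebra A] [PartialOrder A] [StarOrderedRing A]
variable {H : Type*} [NormedAddCommGroup H] [InnerProductSpace ℂ H] [CompleteSpace H]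

lemma GB_hom (v : A →L[ℂ] H) {ι : Type} [Fintype ι] (h : ι → A) (hs : ∀ i, IsSelfAdjoint (h i))
    (R : ℝ) (hR : 0 < R) (h1 : ‖∑ i, h i * h i‖ ≤ R) :
    ∑ i, ‖v (h i)‖ ^ 2 ≤ 3 * ‖v‖ ^ 2 * R := by
  have := GB_all v ι (fun i => (1 / √R) • h i) (fun e => by
      rw [IsSelfAdjoint, star_smul, (hs e).star_eq]; simp) (by
      simp only [smul_mul_smul_comm, ← Finset.smul_sum, norm_smul]
      have : (1 / √R) * (1 / √R) = 1 / R := by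
        rw [div_mul_div_comm, Real.mul_self_sqrt hR.le]; norm_num
      rw [this, Real.norm_of_nonneg (by positivity), div_mul_eq_mul_div, div_le_one hR]
      linarith)
  have hv : ∀ e, ‖v ((1 / √R) • h e)‖ ^ 2 = 1 / R * ‖v (h e)‖ ^ 2 := by
    intro e
    rw [← Complex.coe_smul, map_smul, norm_smul, mul_pow, Complex.norm_real, 
      Real.norm_of_nonneg (by positivity), div_pow, Real.sq_sqrt hR.le]; norm_num
  simp only [hv, ← Finset.mul_sum] at this
  rwa [div_mul_eq_mul_div, one_mul, div_le_iff₀ hR] at this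

lemma sqrt_inv (β : A) (ε : ℝ) (hε : 0 < ε) (hβ : ε • (1 : A) ≤ β) :
    ∃ r s : A, IsSelfAdjoint r ∧ IsSelfAdjoint s ∧ r * r = β ∧ r * s = 1 ∧ s * r = 1 := by
  have h0 : 0 ≤ ε • (1 : A) := smul_nonneg hε.le zero_le_one
  have hβ0 : 0 ≤ β := h0.trans hβ
  have hu : IsUnit (ε • (1 : A)) := by
    have : IsUnit (algebraMap ℝ A ε) := (IsUnit.mk0 ε hε.ne').map _
    rwa [Algebra.algebraMap_eq_smul_one] at this
  have hβu : IsUnit β := CStarAlgebra.isUnit_of_le _ hβ ⟨h0, hu⟩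
  set r := CFC.sqrt β
  have hr : r * r = β := CFC.sqrt_mul_sqrt_self β
  have hr0 : 0 ≤ r := CFC.sqrt_nonneg β
  have hru : IsUnit r := by
    rw [← hr] at hβu
    exact (Commute.isUnit_mul_iff (Commute.refl r)).1 hβu |>.1
  obtain ⟨u, hu⟩ := hru
  refine ⟨r, ↑u⁻¹, hr0.isSelfAdjoint, ?_, hr, by rw [← hu]; simp, by rw [← hu]; simp⟩
  have hsa : IsSelfAdjoint u := by
    ext; rw [Units.coe_star, hu]; exact hr0.isSelfAdjoint
  have : star (u⁻¹) = u⁻¹ := by rw [star_inv, hsa]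
  rw [IsSelfAdjoint, ← Units.coe_star, this]

lemma conj_le_one {x β r s : A} (hs : IsSelfAdjoint s) (hr : r * r = β) (h1 : r * s = 1)
    (h2 : s * r = 1) (hx : x ≤ β) : s * x * s ≤ 1 := by
  have := star_left_conjugate_le_conjugate hx s
  rw [hs.star_eq, ← hr] at this
  calc s * x * s ≤ _ := this
    _ = (s * r) * (r * s) := by simp only [mul_assoc]
    _ = 1 := by rw [h1, h2, one_mul]

/-- orbit map -/
noncomputable def orb (θ : A →ₐ[ℂ] (H →L[ℂ] H)) (C : ℝ) (hC : ∀ a, ‖θ a‖ ≤ C * ‖a‖) (w : H) : A →L[ℂ] H :=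
  LinearMap.mkContinuous
    { toFun := fun a => θ a w
      map_add' := by intro a b; simp
      map_smul' := by intro c a; simp } (C * ‖w‖) (by
    intro a
    refine ((θ a).le_opNorm w).trans ?_
    calc _ ≤ (C * ‖a‖) * ‖w‖ := by gcongr; exact hC a
      _ = _ := by ring)

lemma col (θ : A →ₐ[ℂ] (H →L[ℂ] H)) (C : ℝ) (hC0 : 0 ≤ C) (hC : ∀ a, ‖θ a‖ ≤ C * ‖a‖) (w : H)
    {ι : Type} [Fintype ι] (a : ι → A) (h1 : ∑ i, star (a i) * a i ≤ 1) :
    ∑ i, ‖θ (a i) w‖ ^ 2 ≤ 3 * C ^ 4 * ‖w‖ ^ 2 := by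
  set n : ℝ := (Fintype.card ι : ℝ)
  have key : ∀ ε : ℝ, 0 < ε → ∑ i, ‖θ (a i) w‖ ^ 2 ≤ 3 * C ^ 4 * ‖w‖ ^ 2 * (1 + n * ε) := by
    intro ε hε
    choose r s hr hs hrr hrs hsr using fun i => sqrt_inv (star (a i) * a i + ε • (1 : A)) ε hε
      (le_add_of_nonneg_left (star_mul_self_nonneg _))
    have hc : ∀ i, ‖a i * s i‖ ≤ 1 := by
      intro i
      have : star (a i * s i) * (a i * s i) ≤ 1 := by
        rw [star_mul, (hs i).star_eq]
        have := conj_le_one (x := star (a i) * a i) (hs i) (hrr i) (hrs i) (hsr i)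
          (le_add_of_nonneg_right (smul_nonneg hε.le zero_le_one))
        simpa [mul_assoc] using this
      have h2 := (CStarAlgebra.norm_le_one_iff_of_nonneg _ (star_mul_self_nonneg _)).2 this
      rw [CStarRing.norm_star_mul_self] at h2
      nlinarith [norm_nonneg (a i * s i)]
    have hle : ∀ i, ‖θ (a i) w‖ ^ 2 ≤ C ^ 2 * ‖θ (r i) w‖ ^ 2 := by
      intro i
      have e : a i = (a i * s i) * r i := by rw [mul_assoc, hsr, mul_one]
      have : ‖θ (a i) w‖ ≤ C * ‖θ (r i) w‖ := by
        conv_lhs => rw [e, map_mul]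
        refine ((θ (a i * s i)).le_opNorm (θ (r i) w)).trans ?_
        gcongr
        refine (hC _).trans ?_
        nlinarith [hc i]
      calc _ ≤ (C * ‖θ (r i) w‖) ^ 2 := pow_le_pow_left₀ (norm_nonneg _) this 2
        _ = _ := mul_pow _ _ _
    have hn0 : 0 ≤ n := by positivity
    have hsum : ‖∑ i, r i * r i‖ ≤ 1 + n * ε := by
      have e0 : 0 ≤ ∑ i, r i * r i := Finset.sum_nonneg fun i _ => sa_sq_nonneg (hr i)
      have e1 : ∑ i, r i * r i ≤ algebraMap ℝ A (1 + n * ε) := by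
        simp only [hrr, Finset.sum_add_distrib]
        rw [map_add, map_one]
        refine add_le_add h1 ?_
        simp [n, Algebra.algebraMap_eq_smul_one, mul_smul]
        rw [smul_comm, Nat.cast_smul_eq_nsmul, nsmul_one]
      refine (CStarAlgebra.norm_le_iff_le_algebraMap _ (by positivity) e0).2 e1
    have h3 := GB_hom (orb θ C hC w) r hr (1 + n * ε) (by positivity) hsum
    have hv : ‖orb θ C hC w‖ ≤ C * ‖w‖ := LinearMap.mkContinuous_norm_le _ (by positivity) _
    calc _ ≤ ∑ i, C ^ 2 * ‖θ (r i) w‖ ^ 2 := Finset.sum_le_sum fun i _ => hle i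
      _ = C ^ 2 * ∑ i, ‖orb θ C hC w (r i)‖ ^ 2 := by rw [Finset.mul_sum]; rfl
      _ ≤ C ^ 2 * (3 * (C * ‖w‖) ^ 2 * (1 + n * ε)) := by
        gcongr
        refine h3.trans ?_
        gcongr
      _ = _ := by ring
  have hl : Filter.Tendsto (fun ε : ℝ => 3 * C ^ 4 * ‖w‖ ^ 2 * (1 + n * ε)) (nhdsWithin 0 (Set.Ioi 0))
      (nhds (3 * C ^ 4 * ‖w‖ ^ 2 * (1 + n * 0))) := by
    apply tendsto_nhdsWithin_of_tendsto_nhds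
    apply Continuous.tendsto; fun_prop
  rw [mul_zero, add_zero, mul_one] at hl
  exact ge_of_tendsto hl (Filter.eventually_of_mem self_mem_nhdsWithin fun ε hε => key ε hε)

/-- the adjoint representation -/
noncomputable def sharp (θ : A →ₐ[ℂ] (H →L[ℂ] H)) : A →ₐ[ℂ] (H →L[ℂ] H) :=
  AlgHom.ofLinearMap
    { toFun := fun a => star (θ (star a))
      map_add' := by intro a b; simp
      map_smul' := by intro c a; simp }
    (by simp) (by intro a b; simp)

lemma row (θ : A →ₐ[ℂ] (H →L[ℂ] H)) (C : ℝ) (hC0 : 0 ≤ C) (hC : ∀ a, ‖θ a‖ ≤ C * ‖a‖)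
    {ι : Type} [Fintype ι] (c : ι → A) (h1 : ∑ i, star (c i) * c i ≤ 1) (y : ι → H) :
    ‖∑ i, θ (star (c i)) (y i)‖ ^ 2 ≤ 3 * C ^ 4 * ∑ i, ‖y i‖ ^ 2 := by
  set z := ∑ i, θ (star (c i)) (y i) with hz
  have hcol := col (sharp θ) C hC0 (by
    intro a
    change ‖star (θ (star a))‖ ≤ _
    rw [norm_star]; refine (hC _).trans ?_; rw [norm_star]) z c h1
  have e : ‖z‖ ^ 2 ≤ ∑ i, ‖y i‖ * ‖sharp θ (c i) z‖ := by
    have : ((‖z‖ ^ 2 : ℝ) : ℂ) = ∑ i, ⟪y i, sharp θ (c i) z⟫_ℂ := by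
      push_cast
      rw [← Complex.coe_algebraMap, ← inner_self_eq_norm_sq_to_K (𝕜 := ℂ)]
      nth_rw 1 [hz]
      rw [sum_inner]
      refine Finset.sum_congr rfl fun i _ => ?_
      change _ = ⟪y i, (star (θ (star (c i)))) z⟫_ℂ
      rw [ContinuousLinearMap.star_eq_adjoint, ContinuousLinearMap.adjoint_inner_right]
    have h2 : ‖z‖ ^ 2 = ‖∑ i, ⟪y i, sharp θ (c i) z⟫_ℂ‖ := by
      rw [← this, Complex.norm_real, Real.norm_of_nonneg (by positivity)]
    rw [h2]
    exact (norm_sum_le _ _).trans (Finset.sum_le_sum fun i _ => norm_inner_le_norm _ _)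
  have cs := Finset.sum_mul_sq_le_sq_mul_sq Finset.univ (fun i => ‖y i‖) (fun i => ‖sharp θ (c i) z‖)
  have h0 : 0 ≤ ∑ i, ‖y i‖ ^ 2 := Finset.sum_nonneg fun i _ => by positivity
  have h4 : (‖z‖ ^ 2) ^ 2 ≤ (∑ i, ‖y i‖ ^ 2) * (3 * C ^ 4 * ‖z‖ ^ 2) :=
    (pow_le_pow_left₀ (by positivity) e 2).trans (cs.trans (by gcongr))
  by_cases hz0 : ‖z‖ ^ 2 = 0
  · rw [hz0]; positivity
  have : 0 < ‖z‖ ^ 2 := lt_of_le_of_ne (by positivity) (Ne.symm hz0)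
  nlinarith

lemma key_ineq (θ : A →ₐ[ℂ] (H →L[ℂ] H)) (C : ℝ) (hC0 : 0 ≤ C) (hC : ∀ a, ‖θ a‖ ≤ C * ‖a‖) (w : H)
    {ι κ : Type} [Fintype ι] [Fintype κ] (a : ι → A) (b : κ → A)
    (hab : ∑ i, star (a i) * a i ≤ ∑ j, star (b j) * b j) :
    ∑ i, ‖θ (a i) w‖ ^ 2 ≤ 9 * C ^ 8 * ∑ j, ‖θ (b j) w‖ ^ 2 := by
  have key : ∀ ε : ℝ, 0 < ε → ∑ i, ‖θ (a i) w‖ ^ 2 ≤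
      9 * C ^ 8 * (∑ j, ‖θ (b j) w‖ ^ 2 + ε * ‖w‖ ^ 2) := by
    intro ε hε
    have hb0 : 0 ≤ ∑ j, star (b j) * b j := Finset.sum_nonneg fun i _ => star_mul_self_nonneg _
    obtain ⟨r, s, hr, hs, hrr, hrs, hsr⟩ := sqrt_inv (∑ j, star (b j) * b j + ε • (1 : A)) ε hε
      (le_add_of_nonneg_left hb0)
    let b' : Option κ → A := fun j => j.elim (√ε • (1 : A)) b
    have hb' : ∑ j, star (b' j) * b' j = r * r := by
      rw [hrr, Fintype.sum_option]
      simp only [b', Option.elim, star_smul, smul_mul_smul_comm, star_one, one_mul]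
      rw [add_comm]; congr 2
      simp [Real.mul_self_sqrt hε.le]
    have h1 := col θ C hC0 hC (θ r w) (fun i => a i * s) (by
      have := conj_le_one (x := ∑ i, star (a i) * a i) hs hrr hrs hsr
          (hab.trans (le_add_of_nonneg_right (smul_nonneg hε.le zero_le_one)))
      simpa [hs.star_eq, mul_assoc, Finset.mul_sum, Finset.sum_mul] using this)
    have h2 := row θ C hC0 hC (fun j => b' j * s) (by
      have := conj_le_one (x := r * r) hs rfl hrs hsr le_rfl
      rw [← hb'] at this
      simpa only [star_mul, hs.star_eq, mul_assoc, Finset.mul_sum, Finset.sum_mul] using this)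
      (fun j => θ (b' j) w)
    have e1 : ∀ i, θ (a i * s) (θ r w) = θ (a i) w := by
      intro i
      rw [← mul_apply_eq_comp, ← map_mul, mul_assoc, hsr, mul_one]
    have e2 : ∑ j, θ (star (b' j * s)) (θ (b' j) w) = θ r w := by
      have : ∑ j, star (b' j * s) * b' j = r := by
        simp only [star_mul, hs.star_eq, mul_assoc, ← Finset.mul_sum]
        rw [hb', ← mul_assoc, hsr, one_mul]
      conv_rhs => rw [← this]
      rw [map_sum, sum_apply]
      simp
    have e3 : ∑ j, ‖θ (b' j) w‖ ^ 2 = ∑ j, ‖θ (b j) w‖ ^ 2 + ε * ‖w‖ ^ 2 := by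
      rw [Fintype.sum_option, add_comm]
      congr 1
      simp only [b', Option.elim]
      rw [← Complex.coe_smul, map_smul, map_one]
      simp [norm_smul, mul_pow, Real.sq_sqrt hε.le]
    simp only [e1] at h1
    rw [e2, e3] at h2
    calc _ ≤ 3 * C ^ 4 * ‖θ r w‖ ^ 2 := h1
      _ ≤ 3 * C ^ 4 * (3 * C ^ 4 * (∑ j, ‖θ (b j) w‖ ^ 2 + ε * ‖w‖ ^ 2)) := by gcongr
      _ = _ := by ring
  have hl : Filter.Tendsto (fun ε : ℝ => 9 * C ^ 8 * (∑ j, ‖θ (b j) w‖ ^ 2 + ε * ‖w‖ ^ 2)) (nhdsWithin 0 (Set.Ioi 0))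
      (nhds (9 * C ^ 8 * (∑ j, ‖θ (b j) w‖ ^ 2 + 0 * ‖w‖ ^ 2))) := by
    apply tendsto_nhdsWithin_of_tendsto_nhds
    apply Continuous.tendsto (f := fun ε : ℝ => 9 * C ^ 8 * (∑ j, ‖θ (b j) w‖ ^ 2 + ε * ‖w‖ ^ 2)); fun_prop
  rw [zero_mul, add_zero] at hl
  exact ge_of_tendsto hl (Filter.eventually_of_mem self_mem_nhdsWithin fun ε hε => key ε hε)

end Col
end TRP

set_option linter.unusedSectionVars false
set_option linter.unusedSimpArgs false
namespace TRP
open scoped ComplexOrder InnerProductSpace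

lemma hb_rel {E : Type*} [AddCommGroup E] [Module ℝ E] (R : E → ℝ → Prop)
    (hne : ∀ x, ∃ r, R x r) (hadd : ∀ x y r s, R x r → R y s → R (x + y) (r + s))
    (hsm : ∀ (c : ℝ) x r, 0 < c → R x r → R (c • x) (c * r)) (h0 : ∀ r, R 0 r → 0 ≤ r) :
    ∃ g : E →ₗ[ℝ] ℝ, ∀ x r, R x r → g x ≤ r := by
  have hb : ∀ x, BddBelow {r | R x r} := by
    intro x
    obtain ⟨s, hs⟩ := hne (-x)
    refine ⟨-s, fun r hr => ?_⟩
    have := h0 (r + s) (by simpa using hadd _ _ _ _ hr hs)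
    linarith
  have hsm' : ∀ (c : ℝ), 0 < c → ∀ x, c * sInf {r | R x r} ≤ sInf {r | R (c • x) r} := by
    intro c hc x
    refine le_csInf (hne _) fun r hr => ?_
    have h1 : R x (c⁻¹ * r) := by
      have := hsm c⁻¹ _ _ (inv_pos.2 hc) hr
      rwa [smul_smul, inv_mul_cancel₀ hc.ne', one_smul] at this
    have := csInf_le (hb x) h1
    calc _ ≤ c * (c⁻¹ * r) := by gcongr
      _ = r := by field_simp
  obtain ⟨g, -, hg⟩ := exists_extension_of_le_sublinear (⟨⊥, 0⟩ : E →ₗ.[ℝ] ℝ) (fun x => sInf {r | R x r})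
    (by
      intro c hc x
      refine le_antisymm ?_ (hsm' c hc x)
      have := hsm' c⁻¹ (inv_pos.2 hc) (c • x)
      rw [smul_smul, inv_mul_cancel₀ hc.ne', one_smul] at this
      change sInf _ ≤ c * _
      calc sInf {r | R (c • x) r} = c * (c⁻¹ * sInf {r | R (c • x) r}) := by field_simp
        _ ≤ _ := by gcongr)
    (by
      intro x y
      change _ ≤ sInf {r | R x r} + sInf {r | R y r}
      rw [← csInf_add (s := {r | R x r}) (t := {r | R y r}) (hne x) (hb x) (hne y) (hb y)]
      apply csInf_le_csInf (hb _) (Set.Nonempty.add (s := {r | R x r}) (t := {r | R y r}) (hne x) (hne y))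
      rintro _ ⟨r, hr, s, hs, rfl⟩
      exact hadd _ _ _ _ hr hs)
    (by
      rintro ⟨x, hx⟩
      have : x = 0 := by simpa using hx
      subst this
      exact le_csInf (hne 0) h0)
  exact ⟨g, fun x r hr => (hg x).trans (csInf_le (hb x) hr)⟩

section Cyc
variable {A : Type*} [CStarAlgebra A] [PartialOrder A] [StarOrderedRing A]
variable {H : Type*} [NormedAddCommGroup H] [InnerProductSpace ℂ H] [CompleteSpace H]

def Rel (θ : A →ₐ[ℂ] (H →L[ℂ] H)) (K : ℝ) (w : H) (x : A) (r : ℝ) : Prop :=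
  ∃ (ι κ : Type) (_ : Fintype ι) (_ : Fintype κ) (a : ι → A) (b : κ → A),
    (1 / 2 : ℝ) • (x + star x) + ∑ i, star (a i) * a i ≤ ∑ j, star (b j) * b j ∧
    r = K * ∑ j, ‖θ (b j) w‖ ^ 2 - ∑ i, ‖θ (a i) w‖ ^ 2

lemma exists_g (θ : A →ₐ[ℂ] (H →L[ℂ] H)) (C : ℝ) (hC0 : 0 ≤ C) (hC : ∀ a, ‖θ a‖ ≤ C * ‖a‖) (w : H) :
    ∃ g : A →ₗ[ℝ] ℝ, ∀ x r, Rel θ (9 * C ^ 8) w x r → g x ≤ r := by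
  apply hb_rel
  · intro x
    refine ⟨_, Empty, Unit, inferInstance, inferInstance, Empty.elim,
      fun _ => √‖(1 / 2 : ℝ) • (x + star x)‖ • (1 : A), ?_, rfl⟩
    simp only [Finset.univ_eq_empty, Finset.sum_empty, add_zero, Finset.univ_unique, Finset.sum_singleton,
      star_smul, smul_mul_smul_comm, star_one, one_mul, star_trivial]
    rw [Real.mul_self_sqrt (norm_nonneg _), ← Algebra.algebraMap_eq_smul_one]
    apply IsSelfAdjoint.le_algebraMap_norm_self
    rw [IsSelfAdjoint, star_smul, star_add, star_star, add_comm]; simp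
  · rintro x y r s ⟨ι, κ, _, _, a, b, h, rfl⟩ ⟨ι', κ', _, _, a', b', h', rfl⟩
    refine ⟨ι ⊕ ι', κ ⊕ κ', inferInstance, inferInstance, Sum.elim a a', Sum.elim b b', ?_, ?_⟩
    · simp only [Fintype.sum_sum_type, Sum.elim_inl, Sum.elim_inr]
      convert add_le_add h h' using 1
      simp only [star_add, smul_add]; abel
    · simp only [Fintype.sum_sum_type, Sum.elim_inl, Sum.elim_inr]; ring
  · rintro c x r hc ⟨ι, κ, _, _, a, b, h, rfl⟩
    have e : ∀ y : A, star (√c • y) * (√c • y) = c • (star y * y) := by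
      intro y; rw [star_smul, smul_mul_smul_comm, star_trivial, Real.mul_self_sqrt hc.le]
    have e2 : ∀ y : A, ‖θ (√c • y) w‖ ^ 2 = c * ‖θ y w‖ ^ 2 := by
      intro y
      rw [← Complex.coe_smul, map_smul]
      simp [norm_smul, mul_pow, Real.sq_sqrt hc.le]
    refine ⟨ι, κ, inferInstance, inferInstance, fun i => √c • a i, fun j => √c • b j, ?_, ?_⟩
    · simp only [e, ← Finset.smul_sum]
      convert smul_le_smul_of_nonneg_left h hc.le using 1
      simp only [smul_add, star_smul, star_trivial, smul_comm c]
    · simp only [e2, ← Finset.mul_sum]; ring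
  · rintro r ⟨ι, κ, _, _, a, b, h, rfl⟩
    have := key_ineq θ C hC0 hC w a b (by simpa using h)
    linarith

lemma exists_f (θ : A →ₐ[ℂ] (H →L[ℂ] H)) (C : ℝ) (hC0 : 0 ≤ C) (hC : ∀ a, ‖θ a‖ ≤ C * ‖a‖) (w : H) :
    ∃ f : A →ₚ[ℂ] ℂ, ∀ a, ‖θ a w‖ ^ 2 ≤ (f (star a * a)).re ∧ 
      (f (star a * a)).re ≤ 9 * C ^ 8 * ‖θ a w‖ ^ 2 := by
  obtain ⟨g, hg⟩ := exists_g θ C hC0 hC w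
  have h1 : ∀ a, g (star a * a) ≤ 9 * C ^ 8 * ‖θ a w‖ ^ 2 := by
    intro a
    refine hg _ _ ⟨Empty, Unit, inferInstance, inferInstance, Empty.elim, fun _ => a, ?_, ?_⟩
    · simp [← two_smul ℝ (star a * a), smul_smul]
    · simp
  have h2 : ∀ a, ‖θ a w‖ ^ 2 ≤ g (star a * a) := by
    intro a
    have : g (-(star a * a)) ≤ - ‖θ a w‖ ^ 2 := by
      refine hg _ _ ⟨Unit, Empty, inferInstance, inferInstance, fun _ => a, Empty.elim, ?_, ?_⟩
      · have : -(star a * a) + -(star a * a) = - ((2:ℝ) • (star a * a)) := by rw [two_smul]; abel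
        simp [this, smul_smul]
      · simp
    rw [map_neg] at this; linarith
  have h3 : ∀ x : A, star x = - x → g x = 0 := by
    intro x hx
    have : ∀ x : A, star x = - x → g x ≤ 0 := fun x hx =>
      hg x 0 ⟨Empty, Empty, inferInstance, inferInstance, Empty.elim, Empty.elim, by simp [hx], by simp⟩
    have h' := this (-x) (by simp [hx])
    rw [map_neg] at h'
    linarith [this x hx]
  let f0 : A →ₗ[ℂ] ℂ := 
    { toFun := fun x => (g x : ℂ) - Complex.I * g (Complex.I • x)
      map_add' := by intro x y; simp; ring
      map_smul' := by
        intro c x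
        have e : ∀ y, g (c • y) = c.re * g y + c.im * g (Complex.I • y) := by
          intro y
          have : c • y = c.re • y + c.im • (Complex.I • y) := by
            rw [← Complex.coe_smul, ← Complex.coe_smul, smul_smul, ← add_smul, Complex.re_add_im]
          rw [this]; simp
        rw [smul_comm Complex.I c x, e x, e (Complex.I • x), smul_smul]
        simp
        apply Complex.ext
        · simp
        · simp; ring }
  have hf0 : ∀ x, IsSelfAdjoint x → f0 x = (g x : ℂ) := by
    intro x hx
    have : g (Complex.I • x) = 0 := h3 _ (by rw [star_smul, hx.star_eq]; simp)
    simp [f0, this]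
  refine ⟨PositiveLinearMap.mk₀ f0 ?_, ?_⟩
  · intro x hx
    rw [hf0 x hx.isSelfAdjoint]
    obtain ⟨y, rfl⟩ := CStarAlgebra.nonneg_iff_eq_star_mul_self.1 hx
    exact_mod_cast (by positivity : (0:ℝ) ≤ ‖θ y w‖ ^ 2).trans (h2 y)
  · intro a
    have : (PositiveLinearMap.mk₀ f0 (by
      intro x hx
      rw [hf0 x hx.isSelfAdjoint]
      obtain ⟨y, rfl⟩ := CStarAlgebra.nonneg_iff_eq_star_mul_self.1 hx
      exact_mod_cast (by positivity : (0:ℝ) ≤ ‖θ y w‖ ^ 2).trans (h2 y))) (star a * a) = 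
      (g (star a * a) : ℂ) := hf0 _ (IsSelfAdjoint.star_mul_self a)
    rw [this, Complex.ofReal_re]
    exact ⟨h2 a, h1 a⟩


def Good (θ : A →ₐ[ℂ] (H →L[ℂ] H)) (V : Submodule ℂ H) : Prop :=
  ∃ T : H →L[ℂ] H, T.IsPositive ∧ ∃ c : ℝ, 0 < c ∧ (∀ x ∈ V, c * ‖x‖ ^ 2 ≤ (⟪T x, x⟫_ℂ).re) ∧
    ∀ a, ∀ x ∈ V, ∀ y ∈ V, ⟪T (θ a x), y⟫_ℂ = ⟪T x, θ (star a) y⟫_ℂ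

noncomputable def cyc (θ : A →ₐ[ℂ] (H →L[ℂ] H)) (C : ℝ) (hC : ∀ a, ‖θ a‖ ≤ C * ‖a‖) (w : H) :
    Submodule ℂ H := (LinearMap.range (orb θ C hC w).toLinearMap).topologicalClosure

lemma cyc_sub (θ : A →ₐ[ℂ] (H →L[ℂ] H)) (C : ℝ) (hC : ∀ a, ‖θ a‖ ≤ C * ‖a‖) (w : H)
    (S : Set H) (hS : IsClosed S) (h : ∀ a, θ a w ∈ S) : ∀ x ∈ cyc θ C hC w, x ∈ S := by
  intro x hx
  have hx' : x ∈ closure ((LinearMap.range (orb θ C hC w).toLinearMap : Submodule ℂ H) : Set H) := hx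
  refine closure_minimal ?_ hS hx'
  rintro _ ⟨a, rfl⟩
  exact h a

lemma mem_cyc (θ : A →ₐ[ℂ] (H →L[ℂ] H)) (C : ℝ) (hC : ∀ a, ‖θ a‖ ≤ C * ‖a‖) (w : H) (a : A) :
    θ a w ∈ cyc θ C hC w := 
  Submodule.le_topologicalClosure _ ⟨a, rfl⟩

lemma cyc_closed (θ : A →ₐ[ℂ] (H →L[ℂ] H)) (C : ℝ) (hC : ∀ a, ‖θ a‖ ≤ C * ‖a‖) (w : H) :
    IsClosed (cyc θ C hC w : Set H) := Submodule.isClosed_topologicalClosure _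

lemma cyc_inv (θ : A →ₐ[ℂ] (H →L[ℂ] H)) (C : ℝ) (hC : ∀ a, ‖θ a‖ ≤ C * ‖a‖) (w : H) (a : A) :
    ∀ x ∈ cyc θ C hC w, θ a x ∈ cyc θ C hC w := by
  refine cyc_sub θ C hC w {x | θ a x ∈ cyc θ C hC w} ((cyc_closed θ C hC w).preimage (θ a).continuous) ?_
  intro b
  have := mem_cyc θ C hC w (a * b)
  simpa using this

lemma cyc_good (θ : A →ₐ[ℂ] (H →L[ℂ] H)) (C : ℝ) (hC0 : 0 ≤ C) (hC : ∀ a, ‖θ a‖ ≤ C * ‖a‖) (w : H) :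
    Good θ (cyc θ C hC w) := by
  obtain ⟨f, hf⟩ := exists_f θ C hC0 hC w
  set X := cyc θ C hC w with hX
  haveI : CompleteSpace X := (cyc_closed θ C hC w).completeSpace_coe
  let j : A →ₗ[ℂ] f.GNS := (UniformSpace.Completion.toComplL (𝕜 := ℂ) (E := f.PreGNS)).toLinearMap ∘ₗ f.toPreGNS.toLinearMap
  have hj : ∀ a b, ⟪j a, j b⟫_ℂ = f (star a * b) := by
    intro a b
    change ⟪((f.toPreGNS a : f.PreGNS) : f.GNS), ((f.toPreGNS b : f.PreGNS) : f.GNS)⟫_ℂ = _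
    rw [UniformSpace.Completion.inner_coe, PositiveLinearMap.preGNS_inner_def]; rfl
  have hjn : ∀ a, ‖j a‖ ^ 2 = (f (star a * a)).re := by
    intro a
    rw [← hj, inner_self_eq_norm_sq_to_K]; norm_cast
  let e : A →ₗ[ℂ] X := (orb θ C hC w).toLinearMap.codRestrict X (fun a => mem_cyc θ C hC w a)
  have hed : DenseRange e := by
    intro x
    rw [closure_subtype]
    have hx : (x : H) ∈ closure ((LinearMap.range (orb θ C hC w).toLinearMap : Submodule ℂ H) : Set H) := x.2
    convert hx using 2
    ext y; constructor
    · rintro ⟨_, ⟨a, rfl⟩, rfl⟩; exact ⟨a, rfl⟩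
    · rintro ⟨a, rfl⟩; exact ⟨_, ⟨a, rfl⟩, rfl⟩
  have hbd : ∀ a, ‖j a‖ ≤ (3 * C ^ 4) * ‖e a‖ := by
    intro a
    refine (sq_le_sq₀ (norm_nonneg _) (by positivity)).1 ?_
    rw [hjn]
    calc _ ≤ _ := (hf a).2
      _ = (3 * C ^ 4 * ‖θ a w‖) ^ 2 := by ring
  let R : H →L[ℂ] f.GNS := (j.extendOfNorm e) ∘L X.orthogonalProjectionOnto
  have hR : ∀ a, R (θ a w) = j a := by
    intro a
    have h1 : X.orthogonalProjectionOnto (θ a w) = e a := 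
      Submodule.orthogonalProjectionOnto_mem_subspace_eq_self (e a)
    change j.extendOfNorm e (X.orthogonalProjectionOnto (θ a w)) = j a
    rw [h1]
    exact LinearMap.extendOfNorm_eq hed ⟨_, hbd⟩ a
  have hT : ∀ x y, ⟪(ContinuousLinearMap.adjoint R ∘L R) x, y⟫_ℂ = ⟪R x, R y⟫_ℂ := by
    intro x y
    rw [ContinuousLinearMap.comp_apply, ContinuousLinearMap.adjoint_inner_left]
  refine ⟨ContinuousLinearMap.adjoint R ∘L R, ContinuousLinearMap.isPositive_adjoint_comp_self R, 1, one_pos, ?_, ?_⟩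
  · refine cyc_sub θ C hC w {x | 1 * ‖x‖ ^ 2 ≤ (⟪(ContinuousLinearMap.adjoint R ∘L R) x, x⟫_ℂ).re} ?_ ?_
    · apply isClosed_le
      · fun_prop
      · exact Complex.continuous_re.comp (Continuous.inner (by fun_prop) (by fun_prop))
    · intro a
      rw [Set.mem_setOf_eq, hT, hR, hj, one_mul]
      exact (hf a).1
  · intro a
    refine cyc_sub θ C hC w {x | ∀ y ∈ X, ⟪(ContinuousLinearMap.adjoint R ∘L R) (θ a x), y⟫_ℂ = ⟪(ContinuousLinearMap.adjoint R ∘L R) x, θ (star a) y⟫_ℂ} ?_ ?_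
    · simp only [Set.setOf_forall]
      refine isClosed_iInter fun y => isClosed_iInter fun hy => ?_
      exact isClosed_eq (Continuous.inner (by fun_prop) (by fun_prop)) (Continuous.inner (by fun_prop) (by fun_prop))
    · intro b
      refine cyc_sub θ C hC w {y | ⟪(ContinuousLinearMap.adjoint R ∘L R) (θ a (θ b w)), y⟫_ℂ = ⟪(ContinuousLinearMap.adjoint R ∘L R) (θ b w), θ (star a) y⟫_ℂ} ?_ ?_
      · exact isClosed_eq (Continuous.inner (by fun_prop) (by fun_prop)) (Continuous.inner (by fun_prop) (by fun_prop))
      · intro c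
        rw [Set.mem_setOf_eq, hT, hT, ← mul_apply_eq_comp, ← mul_apply_eq_comp, ← map_mul, ← map_mul, hR, hR, hR, hR, hj, hj,
          star_mul, mul_assoc]

end Cyc
end TRP

set_option linter.unusedSectionVars false
set_option linter.unusedSimpArgs false
namespace TRP
open scoped ComplexOrder InnerProductSpace
universe u

section U

def HTRP (A : Type u) [NormedRing A] [NormedAlgebra ℂ A] : Prop :=
  ∀ (K : Type u) [NormedAddCommGroup K] [InnerProductSpace ℂ K] [CompleteSpace K],
      ∀ θ : A →ₐ[ℂ] (K →L[ℂ] K), Continuous (⇑θ) →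
      ∀ V : Submodule ℂ K, IsClosed (V : Set K) → (∀ a : A, ∀ x ∈ V, θ a x ∈ V) →
      ∃ W : Submodule ℂ K, IsClosed (W : Set K) ∧ (∀ a : A, ∀ x ∈ W, θ a x ∈ W) ∧
        V ⊓ W = ⊥ ∧ V ⊔ W = ⊤

lemma cont_of_bd {A : Type*} [NormedRing A] [NormedAlgebra ℂ A] {K : Type*} [NormedAddCommGroup K] [InnerProductSpace ℂ K]
    (θ : A →ₐ[ℂ] (K →L[ℂ] K)) (C : ℝ) (hC : ∀ a, ‖θ a‖ ≤ C * ‖a‖) : Continuous θ :=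
  (LinearMap.mkContinuous θ.toLinearMap C hC).continuous

def IsProj {A : Type*} [NormedRing A] [NormedAlgebra ℂ A] {K : Type*} [NormedAddCommGroup K] [InnerProductSpace ℂ K]
    (θ : A →ₐ[ℂ] (K →L[ℂ] K)) (V : Submodule ℂ K) (Q : K →L[ℂ] K) : Prop :=
  (∀ x, Q x ∈ V) ∧ (∀ x ∈ V, Q x = x) ∧ ∀ a x, Q (θ a x) = θ a (Q x)

lemma proj_exists {A : Type u} [NormedRing A] [NormedAlgebra ℂ A] (ht : HTRP A) {K : Type u} [NormedAddCommGroup K]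
    [InnerProductSpace ℂ K] [CompleteSpace K] (θ : A →ₐ[ℂ] (K →L[ℂ] K)) (hθ : Continuous θ)
    (V : Submodule ℂ K) (hV : IsClosed (V : Set K)) (hi : ∀ a : A, ∀ x ∈ V, θ a x ∈ V) :
    ∃ Q, IsProj θ V Q := by
  obtain ⟨W, hW, hWi, h1, h2⟩ := ht K θ hθ V hV hi
  have hc : IsCompl V W := ⟨disjoint_iff.2 h1, codisjoint_iff.2 h2⟩
  have h := Submodule.IsCompl.isTopCompl_of_isClosed hc hV hW
  refine ⟨V.projectionL W h, fun x => Submodule.projectionL_apply_mem h x,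
    fun x hx => Submodule.projectionL_apply_left h ⟨x, hx⟩, fun a x => ?_⟩
  have hx := Submodule.projectionL_add_projectionL_eq_self h x
  set p := V.projectionL W h x with hp
  set q := W.projectionL V h.symm x with hq
  have hpV : p ∈ V := Submodule.projectionL_apply_mem h x
  have hqW : q ∈ W := Submodule.projectionL_apply_mem h.symm x
  rw [← hx, map_add, map_add, Submodule.projectionL_apply_left h ⟨_, hi a p hpV⟩,
    Submodule.projectionL_apply_right h ⟨_, hWi a q hqW⟩, add_zero]

structure Pt (A : Type u) [NormedRing A] [NormedAlgebra ℂ A] (C : ℝ) where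
  Z : Type u
  [i1 : NormedAddCommGroup Z]
  [i2 : InnerProductSpace ℂ Z]
  [i3 : CompleteSpace Z]
  Θ : A →ₐ[ℂ] (Z →L[ℂ] Z)
  hΘ : ∀ a, ‖Θ a‖ ≤ C * ‖a‖
  V : Submodule ℂ Z
  hV : IsClosed (V : Set Z)
  hi : ∀ a : A, ∀ x ∈ V, Θ a x ∈ V

attribute [instance] Pt.i1 Pt.i2 Pt.i3

section diag
variable {Z : ℕ → Type u} [∀ n, NormedAddCommGroup (Z n)] [∀ n, InnerProductSpace ℂ (Z n)]

noncomputable def diag (c : ℝ) (hc : 0 ≤ c) (D : ∀ n, Z n →L[ℂ] Z n) (hD : ∀ n, ‖D n‖ ≤ c) : lp Z 2 →L[ℂ] lp Z 2 :=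
  LinearMap.mkContinuous
    { toFun := fun x => ⟨fun n => D n (x n), by
        have h1 := lp.memℓp ((c : ℂ) • x)
        refine memℓp_gen ?_
        refine Summable.of_nonneg_of_le (fun n => by positivity) (fun n => ?_) (h1.summable (by norm_num))
        refine Real.rpow_le_rpow (norm_nonneg _) ?_ (by norm_num)
        refine ((D n).le_opNorm _).trans ?_
        rw [lp.coeFn_smul, Pi.smul_apply, norm_smul, Complex.norm_real, Real.norm_of_nonneg hc]
        gcongr
        exact hD n⟩
      map_add' := by intro x y; ext n; exact map_add (D n) _ _
      map_smul' := by intro c x; ext n; exact map_smul (D n) _ _ } c (by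
    intro x
    have : c * ‖x‖ = ‖(c : ℂ) • x‖ := by rw [norm_smul, Complex.norm_real, Real.norm_of_nonneg hc]
    rw [this]
    refine lp.norm_mono (by norm_num) fun n => ?_
    refine ((D n).le_opNorm _).trans ?_
    rw [lp.coeFn_smul, Pi.smul_apply, norm_smul, Complex.norm_real, Real.norm_of_nonneg hc]
    gcongr
    exact hD n)

lemma diag_apply (c : ℝ) (hc : 0 ≤ c) (D : ∀ n, Z n →L[ℂ] Z n) (hD : ∀ n, ‖D n‖ ≤ c) (x : lp Z 2) (n : ℕ) :
    diag c hc D hD x n = D n (x n) := rfl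

lemma diag_norm (c : ℝ) (hc : 0 ≤ c) (D : ∀ n, Z n →L[ℂ] Z n) (hD : ∀ n, ‖D n‖ ≤ c)  :
    ‖diag c hc D hD‖ ≤ c := LinearMap.mkContinuous_norm_le _ hc _

noncomputable def sing (n : ℕ) : Z n →L[ℂ] lp Z 2 :=
  LinearMap.mkContinuous (lp.lsingle (𝕜 := ℂ) 2 n) 1 (by
    intro x; rw [one_mul]; exact (lp.norm_single (E := Z) (p := 2) (by norm_num) n x).le)

noncomputable def evl (n : ℕ) : lp Z 2 →L[ℂ] Z n :=
  LinearMap.mkContinuous 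
   { toFun := fun x => x n
     map_add' := by intro x y; simp
     map_smul' := by intro x y; simp } 1 (by
    intro x; rw [one_mul]; exact lp.norm_apply_le_norm (by norm_num) x n)

lemma comp_norm (n : ℕ) (Q : lp Z 2 →L[ℂ] lp Z 2) : ‖evl n ∘L Q ∘L sing n‖ ≤ ‖Q‖ := by
  have h1 : ‖(evl n : lp Z 2 →L[ℂ] Z n)‖ ≤ 1 := LinearMap.mkContinuous_norm_le _ zero_le_one _
  have h2 : ‖(sing n : Z n →L[ℂ] lp Z 2)‖ ≤ 1 := LinearMap.mkContinuous_norm_le _ zero_le_one _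
  calc _ ≤ _ := ContinuousLinearMap.opNorm_comp_le _ _
    _ ≤ 1 * (‖Q‖ * 1) := by
      gcongr
      refine (ContinuousLinearMap.opNorm_comp_le _ _).trans ?_
      gcongr
    _ = _ := by ring

end diag

lemma unif_proj {A : Type u} [NormedRing A] [NormedAlgebra ℂ A] (ht : HTRP A) (C : ℝ) (hC : 0 ≤ C) :
    ∃ M : ℝ, ∀ B : Pt A C, ∃ Q, IsProj B.Θ B.V Q ∧ ‖Q‖ ≤ M := by
  by_contra! hcon
  choose B hB using fun n : ℕ => hcon n
  let Z := fun n => (B n).Z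
  have hD : ∀ a n, ‖(B n).Θ a‖ ≤ C * ‖a‖ := fun a n => (B n).hΘ a
  have hc0 : ∀ a : A, 0 ≤ C * ‖a‖ := fun a => by positivity
  let Θ : A →ₐ[ℂ] (lp Z 2 →L[ℂ] lp Z 2) := AlgHom.ofLinearMap
    { toFun := fun a => diag (C * ‖a‖) (hc0 a) (fun n => (B n).Θ a) (hD a)
      map_add' := by intro a b; ext x n; simp [diag_apply]
      map_smul' := by intro c a; ext x n; simp [diag_apply] }
    (by ext x n; simp [diag_apply]) (by intro a b; ext x n; simp [diag_apply])
  have hΘa : ∀ a (x : lp Z 2) n, Θ a x n = (B n).Θ a (x n) := fun a x n => rfl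
  have hΘ : Continuous Θ := cont_of_bd Θ C fun a => diag_norm _ (hc0 a) _ (hD a)
  let V : Submodule ℂ (lp Z 2) :=
    { carrier := {x | ∀ n, x n ∈ (B n).V}
      add_mem' := by intro x y hx hy n; exact add_mem (hx n) (hy n)
      zero_mem' := by intro n; exact zero_mem _
      smul_mem' := by intro c x hx n; exact Submodule.smul_mem _ _ (hx n) }
  obtain ⟨Q, hQ1, hQ2, hQ3⟩ := proj_exists ht Θ hΘ V (by
    change IsClosed {x : lp Z 2 | ∀ n, x n ∈ (B n).V}
    simp only [Set.setOf_forall]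
    exact isClosed_iInter fun n => (B n).hV.preimage (evl n).continuous) (by
    intro a x hx n
    exact (B n).hi a _ (hx n))
  obtain ⟨n, hn⟩ := exists_nat_ge ‖Q‖
  have hs : ∀ x : Z n, sing n x = lp.single 2 n x := fun x => rfl
  have hnot := hB n (evl n ∘L Q ∘L sing (Z := Z) n) ⟨?_, ?_, ?_⟩
  · have := comp_norm n Q
    linarith
  · intro x; exact hQ1 _ n
  · intro x hx
    have : (sing n x : lp Z 2) ∈ V := by
      intro m
      rw [hs]
      by_cases hm : m = n
      · subst hm; rw [lp.single_apply_self]; exact hx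
      · rw [lp.single_apply_ne _ _ _ hm]; exact zero_mem _
    change evl n (Q (sing n x)) = x
    rw [hQ2 _ this, hs]
    exact lp.single_apply_self (E := Z) 2 n x
  · intro a x
    have : (sing n ((B n).Θ a x) : lp Z 2) = Θ a (sing n x) := by
      ext m
      rw [hΘa, hs, hs]
      by_cases hm : m = n
      · subst hm; rw [lp.single_apply_self, lp.single_apply_self]
      · rw [lp.single_apply_ne _ _ _ hm, lp.single_apply_ne _ _ _ hm, map_zero]
    change evl n (Q (sing n _)) = (B n).Θ a (evl n (Q (sing n x)))
    rw [this, hQ3]; rfl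


lemma unif_proj' {A : Type u} [NormedRing A] [NormedAlgebra ℂ A] (ht : HTRP A) (C : ℝ) (hC : 0 ≤ C) :
    ∃ M : ℝ, ∀ (Z : Type u) [NormedAddCommGroup Z] [InnerProductSpace ℂ Z] [CompleteSpace Z]
      (Θ : A →ₐ[ℂ] (Z →L[ℂ] Z)) (_ : ∀ a, ‖Θ a‖ ≤ C * ‖a‖) (V : Submodule ℂ Z) (_ : IsClosed (V : Set Z))
      (_ : ∀ a : A, ∀ x ∈ V, Θ a x ∈ V), ∃ Q, IsProj Θ V Q ∧ ‖Q‖ ≤ M := by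
  obtain ⟨M, hM⟩ := unif_proj ht C hC
  exact ⟨M, fun Z _ _ _ Θ hΘ V hV hi => hM ⟨Z, Θ, hΘ, V, hV, hi⟩⟩

section der
variable {A : Type u} [NormedRing A] [NormedAlgebra ℂ A]
variable {K : Type u} [NormedAddCommGroup K] [InnerProductSpace ℂ K]

noncomputable def fstL : WithLp 2 (K × K) →L[ℂ] K := 
  ContinuousLinearMap.fst ℂ K K ∘L (WithLp.prodContinuousLinearEquiv 2 ℂ K K).toContinuousLinearMap
noncomputable def sndL : WithLp 2 (K × K) →L[ℂ] K := 
  ContinuousLinearMap.snd ℂ K K ∘L (WithLp.prodContinuousLinearEquiv 2 ℂ K K).toContinuousLinearMap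
noncomputable def inlL : K →L[ℂ] WithLp 2 (K × K) := 
  (WithLp.prodContinuousLinearEquiv 2 ℂ K K).symm.toContinuousLinearMap ∘L ContinuousLinearMap.inl ℂ K K
noncomputable def inrL : K →L[ℂ] WithLp 2 (K × K) := 
  (WithLp.prodContinuousLinearEquiv 2 ℂ K K).symm.toContinuousLinearMap ∘L ContinuousLinearMap.inr ℂ K K

lemma fst_inl (x : K) : fstL (inlL x) = x := rfl
lemma fst_inr (x : K) : fstL (inrL x) = 0 := rfl
lemma snd_inl (x : K) : sndL (inlL x) = 0 := rfl
lemma snd_inr (x : K) : sndL (inrL x) = x := rfl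
lemma ext_L {z z' : WithLp 2 (K × K)} (h1 : fstL z = fstL z') (h2 : sndL z = sndL z') : z = z' := by
  apply (WithLp.prodContinuousLinearEquiv 2 ℂ K K).injective
  exact Prod.ext h1 h2
lemma norm_fstL (z : WithLp 2 (K × K)) : ‖fstL z‖ ≤ ‖z‖ := WithLp.norm_fst_le (x := z)
lemma norm_sndL (z : WithLp 2 (K × K)) : ‖sndL z‖ ≤ ‖z‖ := WithLp.norm_snd_le (x := z)
lemma norm_inlL (z : K) : ‖inlL z‖ ≤ ‖z‖ := (WithLp.norm_toLp_fst 2 K K z).le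
lemma norm_inrL (z : K) : ‖inrL z‖ ≤ ‖z‖ := (WithLp.norm_toLp_snd 2 K K z).le

noncomputable def tri (π : A →ₐ[ℂ] (K →L[ℂ] K)) (L : K →L[ℂ] K) : A →ₐ[ℂ] (WithLp 2 (K × K) →L[ℂ] WithLp 2 (K × K)) :=
  AlgHom.ofLinearMap
    { toFun := fun a => inlL ∘L π a ∘L fstL + inlL ∘L (L * π a - π a * L) ∘L sndL + inrL ∘L π a ∘L sndL
      map_add' := by
        intro a b; ext z; apply ext_L <;> simp [fst_inl, fst_inr, snd_inl, snd_inr, add_mul, mul_add]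
        abel
      map_smul' := by
        intro c a; ext z; apply ext_L <;> simp [fst_inl, fst_inr, snd_inl, snd_inr, add_mul, mul_add, smul_sub] }
    (by ext z; apply ext_L <;> simp [fst_inl, fst_inr, snd_inl, snd_inr])
    (by
      intro a b; ext z; apply ext_L
      · simp [fst_inl, fst_inr, snd_inl, snd_inr, mul_assoc]; abel
      · simp [fst_inl, fst_inr, snd_inl, snd_inr, mul_assoc])

lemma tri_fst (π : A →ₐ[ℂ] (K →L[ℂ] K)) (L : K →L[ℂ] K) (a : A) (z : WithLp 2 (K × K)) :
    fstL (tri π L a z) = π a (fstL z) + (L (π a (sndL z)) - π a (L (sndL z))) := by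
  change fstL ((inlL ∘L π a ∘L fstL + inlL ∘L (L * π a - π a * L) ∘L sndL + inrL ∘L π a ∘L sndL) z) = _
  simp [fst_inl, fst_inr, snd_inl, snd_inr]

lemma tri_snd (π : A →ₐ[ℂ] (K →L[ℂ] K)) (L : K →L[ℂ] K) (a : A) (z : WithLp 2 (K × K)) :
    sndL (tri π L a z) = π a (sndL z) := by
  change sndL ((inlL ∘L π a ∘L fstL + inlL ∘L (L * π a - π a * L) ∘L sndL + inrL ∘L π a ∘L sndL) z) = _
  simp [fst_inl, fst_inr, snd_inl, snd_inr]

lemma tri_norm (π : A →ₐ[ℂ] (K →L[ℂ] K)) (L : K →L[ℂ] K) (a : A) :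
    ‖tri π L a‖ ≤ 2 * ‖π a‖ + ‖L * π a - π a * L‖ := by
  refine ContinuousLinearMap.opNorm_le_bound _ (by positivity) fun z => ?_
  have h0 : tri π L a z = inlL (π a (fstL z)) + inlL ((L * π a - π a * L) (sndL z)) + inrL (π a (sndL z)) := rfl
  rw [h0]
  have h1 : ‖inlL (π a (fstL z))‖ ≤ ‖π a‖ * ‖z‖ :=
    (norm_inlL _).trans ((π a).le_opNorm_of_le (norm_fstL z))
  have h2 : ‖inlL ((L * π a - π a * L) (sndL z))‖ ≤ ‖L * π a - π a * L‖ * ‖z‖ :=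
    (norm_inlL _).trans ((L * π a - π a * L).le_opNorm_of_le (norm_sndL z))
  have h3 : ‖inrL (π a (sndL z))‖ ≤ ‖π a‖ * ‖z‖ :=
    (norm_inrL _).trans ((π a).le_opNorm_of_le (norm_sndL z))
  refine (norm_add₃_le).trans ?_
  linarith
end der

lemma unif_der {A : Type u} [NormedRing A] [NormedAlgebra ℂ A] (ht : HTRP A) (C : ℝ) (hC : 0 ≤ C) :
    ∃ M : ℝ, ∀ (K : Type u) [NormedAddCommGroup K] [InnerProductSpace ℂ K] [CompleteSpace K]
      (π : A →ₐ[ℂ] (K →L[ℂ] K)) (L : K →L[ℂ] K), (∀ a, ‖π a‖ ≤ C * ‖a‖) → 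
      (∀ a, ‖L * π a - π a * L‖ ≤ C * ‖a‖) →
      ∃ T : K →L[ℂ] K, ‖T‖ ≤ M ∧ ∀ a, T * π a - π a * T = L * π a - π a * L := by
  obtain ⟨M, hM⟩ := unif_proj' ht (3 * C) (by positivity)
  refine ⟨M, fun K _ _ _ π L hπ hL => ?_⟩
  obtain ⟨Q, ⟨hQ1, hQ2, hQ3⟩, hQ⟩ := hM (WithLp 2 (K × K)) (tri π L) (by
        intro a
        refine (tri_norm π L a).trans ?_
        linarith [hπ a, hL a])
      (sndL : WithLp 2 (K × K) →L[ℂ] K).ker (sndL : WithLp 2 (K × K) →L[ℂ] K).isClosed_ker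
      (by
        intro a x hx
        have hx' : sndL x = 0 := hx
        change sndL (tri π L a x) = 0
        rw [tri_snd, hx', map_zero])
  have hQ1' : ∀ z : WithLp 2 (K × K), (sndL : WithLp 2 (K × K) →L[ℂ] K) (Q z) = 0 := fun z => LinearMap.mem_ker.1 (hQ1 z)
  refine ⟨-(fstL ∘L Q ∘L inrL), ?_, fun a => ?_⟩
  · rw [norm_neg]
    have hM0 : 0 ≤ M := (norm_nonneg Q).trans hQ
    refine ContinuousLinearMap.opNorm_le_bound _ hM0 fun y => ?_
    rw [ContinuousLinearMap.comp_apply, ContinuousLinearMap.comp_apply]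
    refine (norm_fstL _).trans ?_
    refine (Q.le_opNorm_of_le (norm_inrL y)).trans ?_
    gcongr
  · ext y
    have h1 : fstL (Q (tri π L a (inrL y))) = fstL (tri π L a (Q (inrL y))) := congrArg fstL (hQ3 a (inrL y))
    have h2 : tri π L a (inrL y) = inlL (L (π a y) - π a (L y)) + inrL (π a y) := by
      apply ext_L
      · rw [tri_fst]; simp [fst_inl, fst_inr, snd_inl, snd_inr]
      · rw [tri_snd]; simp [fst_inl, fst_inr, snd_inl, snd_inr]
    rw [tri_fst, hQ1', h2, map_add Q, hQ2 (inlL _) (LinearMap.mem_ker.2 (snd_inl _)), map_add, fst_inl] at h1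
    simp only [map_zero, sub_zero, add_zero] at h1
    simp only [ContinuousLinearMap.sub_apply, mul_apply_eq_comp, ContinuousLinearMap.neg_apply, ContinuousLinearMap.comp_apply,
      map_neg, sub_neg_eq_add]
    rw [← h1]; abel

end U
end TRP

set_option linter.unusedSectionVars false
set_option linter.unusedSimpArgs false
namespace TRP
open scoped ComplexOrder InnerProductSpace
open Filter Topology

lemma wot_lim {H : Type*} [NormedAddCommGroup H] [InnerProductSpace ℂ H] [CompleteSpace H] {ι : Type*}
    (U : Ultrafilter ι) (T : ι → H →L[ℂ] H) (D : ℝ) (hT : ∀ i, ‖T i‖ ≤ D) :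
    ∃ S : H →L[ℂ] H, ∀ x y, Tendsto (fun i => ⟪T i x, y⟫_ℂ) U (𝓝 ⟪S x, y⟫_ℂ) := by
  have hb : ∀ x y i, ‖⟪T i x, y⟫_ℂ‖ ≤ D * ‖x‖ * ‖y‖ := by
    intro x y i
    refine (norm_inner_le_norm _ _).trans ?_
    gcongr
    exact (T i).le_of_opNorm_le (hT i) x
  have hl : ∀ x y, ∃ l : ℂ, ‖l‖ ≤ D * ‖x‖ * ‖y‖ ∧ Tendsto (fun i => ⟪T i x, y⟫_ℂ) U (𝓝 l) := by
    intro x y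
    obtain ⟨l, hl, h⟩ := (isCompact_closedBall (0 : ℂ) (D * ‖x‖ * ‖y‖)).ultrafilter_le_nhds
      (U.map fun i => ⟪T i x, y⟫_ℂ) (by
        rw [le_principal_iff]
        refine mem_map.2 (univ_mem' fun i => ?_)
        simpa using hb x y i)
    exact ⟨l, by simpa using hl, h⟩
  choose B hB1 hB2 using hl
  let B' : H →ₗ⋆[ℂ] H →ₗ[ℂ] ℂ := LinearMap.mk₂'ₛₗ _ _ B
    (by
      intro x x' y
      refine tendsto_nhds_unique (hB2 _ _) ?_
      simpa [inner_add_left] using (hB2 x y).add (hB2 x' y))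
    (by
      intro c x y
      refine tendsto_nhds_unique (hB2 _ _) ?_
      simpa [inner_smul_left, mul_comm] using (hB2 x y).const_mul (starRingEnd ℂ c))
    (by
      intro x y y'
      refine tendsto_nhds_unique (hB2 _ _) ?_
      simpa [inner_add_right] using (hB2 x y).add (hB2 x y'))
    (by
      intro c x y
      refine tendsto_nhds_unique (hB2 _ _) ?_
      simpa [inner_smul_right] using (hB2 x y).const_mul c)
  let B'' : H →L⋆[ℂ] H →L[ℂ] ℂ := B'.mkContinuous₂ D (fun x y => hB1 x y)
  refine ⟨InnerProductSpace.continuousLinearMapOfBilin B'', fun x y => ?_⟩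
  rw [InnerProductSpace.continuousLinearMapOfBilin_apply]
  exact hB2 x y

end TRP

set_option linter.unusedSectionVars false
set_option linter.unusedSimpArgs false
namespace TRP
open scoped ComplexOrder InnerProductSpace
open Filter Topology

section strip
variable {B : Type*} [CStarAlgebra B]

/-- the one-parameter group of `L`. -/
noncomputable def ex (L : B) (z : ℂ) : B := NormedSpace.exp (z • L)

lemma ex_add (L : B) (z w : ℂ) : ex L (z + w) = ex L z * ex L w := by
  letI : NormedAlgebra ℚ B := NormedAlgebra.restrictScalars ℚ ℂ B
  unfold ex
  rw [add_smul, NormedSpace.exp_add_of_commute]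
  exact ((Commute.refl L).smul_left z).smul_right w

lemma ex_zero (L : B) : ex L 0 = 1 := by simp [ex]

lemma ex_neg (L : B) (z : ℂ) : ex L z * ex L (-z) = 1 := by
  rw [← ex_add, add_neg_cancel, ex_zero]

lemma ex_neg' (L : B) (z : ℂ) : ex L (-z) * ex L z = 1 := by
  rw [← ex_add, neg_add_cancel, ex_zero]

lemma ex_deriv (L : B) (z : ℂ) : HasDerivAt (ex L) (ex L z * L) z := hasDerivAt_exp_smul_const L z

lemma ex_star (L : B) (hL : IsSelfAdjoint L) (z : ℂ) : star (ex L z) = ex L (starRingEnd ℂ z) := by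
  unfold ex
  rw [NormedSpace.star_exp, star_smul, hL.star_eq]; rfl

lemma ex_cont (L : B) : Continuous (ex L) :=
  continuous_iff_continuousAt.2 fun z => (ex_deriv L z).continuousAt

lemma ex_I (L : B) (hL : IsSelfAdjoint L) (y : ℝ) : ex L (y * Complex.I) ∈ unitary B := by
  have : star (ex L (y * Complex.I)) = ex L (-(y * Complex.I)) := by
    rw [ex_star L hL]; simp
  rw [Unitary.mem_iff, this]
  exact ⟨ex_neg' _ _, ex_neg _ _⟩

/-- conjugation flow. -/
noncomputable def fl (L X : B) (z : ℂ) : B := ex L z * X * ex L (-z)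

lemma fl_norm (L X : B) (hL : IsSelfAdjoint L) (z : ℂ) : ‖fl L X z‖ = ‖fl L X z.re‖ := by
  have h1 := ex_I L hL z.im
  have h2 := ex_I L hL (-z.im)
  have : fl L X z = ex L (z.im * Complex.I) * (fl L X z.re * ex L (((-z.im : ℝ) : ℂ) * Complex.I)) := by
    unfold fl
    conv_lhs => rw [← Complex.re_add_im z]
    rw [add_comm, ex_add, neg_add, add_comm, ex_add]
    simp [mul_assoc]
  rw [this, CStarRing.norm_mem_unitary_mul _ h1, CStarRing.norm_mul_mem_unitary _ h2]

lemma fl_deriv (L X : B) (z : ℂ) : HasDerivAt (fl L X)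
    (ex L z * L * X * ex L (-z) + ex L z * X * (-(ex L (-z) * L))) z := by
  have h1 := (ex_deriv L z).mul_const X
  have h2 : HasDerivAt (fun z => ex L (-z)) (-(ex L (-z) * L)) z := by
    have := HasDerivAt.scomp z (ex_deriv L (-z)) (hasDerivAt_neg z)
    simpa [Function.comp_def] using this
  exact h1.mul h2

lemma strip (L X : B) (hL : IsSelfAdjoint L) (c : ℝ) (h1 : ‖ex L 1 * X * ex L (-1)‖ ≤ c)
    (h2 : ‖ex L (-1) * X * ex L 1‖ ≤ c) : ‖X‖ ≤ c ∧ ‖L * X - X * L‖ ≤ c := by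
  have hdiff : Differentiable ℂ (fl L X) := fun z => (fl_deriv L X z).differentiableAt
  have hcont : Continuous fun t : ℝ => fl L X t := hdiff.continuous.comp Complex.continuous_ofReal
  obtain ⟨D, hD⟩ := (isCompact_Icc (a := (-1:ℝ)) (b := 1)).exists_bound_of_continuousOn hcont.continuousOn
  have key : ∀ z : ℂ, -1 ≤ z.re → z.re ≤ 1 → ‖fl L X z‖ ≤ c := by
    intro z hz1 hz2
    refine PhragmenLindelof.vertical_strip (a := -1) (b := 1) hdiff.diffContOnCl ?_ ?_ ?_ hz1 hz2
    · refine ⟨0, by positivity, 0, ?_⟩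
      refine Asymptotics.IsBigO.of_bound D ?_
      refine eventually_inf_principal.2 (Eventually.of_forall fun w hw => ?_)
      have hw : -1 < w.re ∧ w.re < 1 := hw
      rw [fl_norm L X hL]
      simpa using hD w.re ⟨hw.1.le, hw.2.le⟩
    · intro w hw
      rw [fl_norm L X hL, hw]
      simpa [fl] using h2
    · intro w hw
      rw [fl_norm L X hL, hw]
      simpa [fl] using h1
  constructor
  · simpa [fl, ex_zero] using key 0 (by simp) (by simp)
  · have := Complex.norm_deriv_le_of_forall_mem_sphere_norm_le (f := fl L X) (c := 0) (R := 1) (C := c) one_pos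
      hdiff.diffContOnCl (by
        intro z hz
        have h : |z.re| ≤ 1 := (Complex.abs_re_le_norm z).trans (by simpa using hz.le)
        exact key z (abs_le.1 h).1 (abs_le.1 h).2)
    rw [(fl_deriv L X 0).deriv] at this
    simpa [ex_zero, sub_eq_add_neg] using this
end strip

section expo
variable {B : Type*} [CStarAlgebra B] [PartialOrder B] [StarOrderedRing B]

lemma ex_real (L : B) (hL : IsSelfAdjoint L) (t : ℝ) :
    ex L t = cfc (fun x => Real.exp (t * x)) L := by
  have h : IsSelfAdjoint ((t : ℝ) • L) := (IsSelfAdjoint.all t).smul hL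
  unfold ex
  rw [Complex.coe_smul, ← CFC.real_exp_eq_normedSpace_exp h]
  rw [← cfc_comp_smul t Real.exp L (by fun_prop) hL]
  rfl

lemma ex_sa (L : B) (hL : IsSelfAdjoint L) (t : ℝ) : IsSelfAdjoint (ex L t) := by
  rw [isSelfAdjoint_iff, ex_star L hL]; simp

lemma ex_le (L : B) (l t : ℝ) (hl : L ≤ l • 1) (h0 : 0 ≤ L) (ht : 0 ≤ t) :
    1 ≤ ex L t ∧ ex L t ≤ Real.exp (t * l) • (1 : B) := by
  have hL : IsSelfAdjoint L := .of_nonneg h0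
  rw [ex_real L hL, ← Algebra.algebraMap_eq_smul_one, ← map_one (algebraMap ℝ B)]
  rw [← Algebra.algebraMap_eq_smul_one, le_algebraMap_iff_spectrum_le] at hl
  constructor
  · refine algebraMap_le_cfc _ _ _ ?_
    intro x hx
    have := spectrum_nonneg_of_nonneg h0 hx
    exact Real.one_le_exp (by positivity)
  · refine cfc_le_algebraMap _ _ _ ?_
    intro x hx
    have := hl x hx
    exact Real.exp_le_exp.2 (by gcongr)

lemma exists_log (T : B) (k : ℝ) (hk : 1 ≤ k) (h1 : 1 ≤ T) (h2 : T ≤ k • 1) : ∃ L : B, 0 ≤ L ∧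
    L ≤ (Real.log k / 2) • 1 ∧ ex L 1 * ex L 1 = T := by
  have h0 : 0 ≤ T := zero_le_one.trans h1
  have hT : IsSelfAdjoint T := .of_nonneg h0
  rw [← Algebra.algebraMap_eq_smul_one, le_algebraMap_iff_spectrum_le] at h2
  rw [← map_one (algebraMap ℝ B), algebraMap_le_iff_le_spectrum] at h1
  have hc : ContinuousOn (fun x => Real.log x / 2) (spectrum ℝ T) := by
    refine ContinuousOn.div_const (Real.continuousOn_log.mono ?_) _
    intro x hx
    have := h1 x hx
    simp; linarith
  refine ⟨cfc (fun x => Real.log x / 2) T, ?_, ?_, ?_⟩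
  · refine cfc_nonneg ?_
    intro x hx
    have := Real.log_nonneg (h1 x hx)
    positivity
  · rw [← Algebra.algebraMap_eq_smul_one]
    refine cfc_le_algebraMap _ _ _ ?_
    intro x hx
    have := h1 x hx
    have h3 := Real.log_le_log (by linarith) (h2 x hx)
    linarith
  · rw [← ex_add]
    have : (1 + 1 : ℂ) = ((2 : ℝ) : ℂ) := by norm_num
    rw [this, ex_real _ (cfc_predicate _ _), ← cfc_comp _ _ T hT (by fun_prop) hc]
    conv_rhs => rw [← cfc_id ℝ T]
    refine cfc_congr ?_
    intro x hx
    have := h1 x hx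
    simp only [Function.comp, id]
    rw [mul_div_cancel₀ _ two_ne_zero, Real.exp_log (by linarith)]
end expo
end TRP

set_option linter.unusedSectionVars false
set_option linter.unusedSimpArgs false
namespace TRP
open scoped ComplexOrder InnerProductSpace
open Filter Topology
universe u

section improve
variable {B : Type*} [CStarAlgebra B] [PartialOrder B] [StarOrderedRing B]

lemma le_of_near_one (G : B) (hG : IsSelfAdjoint G) (e : ℝ) (h : ‖G - 1‖ ≤ e) :
    (1 - e) • (1 : B) ≤ G ∧ G ≤ (1 + e) • (1 : B) := by
  have hs : IsSelfAdjoint (G - 1) := hG.sub (.one B)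
  have h1 := hs.le_algebraMap_norm_self
  have h2 := hs.neg_algebraMap_norm_le_self
  rw [Algebra.algebraMap_eq_smul_one] at h1 h2
  have h3 : ‖G - 1‖ • (1 : B) ≤ e • 1 := smul_le_smul_of_nonneg_right h zero_le_one
  constructor
  · have := (neg_le_neg h3).trans h2
    rw [sub_smul, one_smul]
    have := add_le_add_left this 1
    simpa [sub_eq_add_neg, add_comm] using this
  · have := h1.trans h3
    rw [add_smul, one_smul]
    rw [sub_le_iff_le_add] at this
    rwa [add_comm]

lemma ex_derivR (L : B) (t : ℝ) : HasDerivAt (fun s : ℝ => ex L s) (ex L t * L) t := by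
  have h : HasDerivAt (fun s : ℝ => (s : ℂ)) 1 t := Complex.ofRealCLM.hasDerivAt
  have := HasDerivAt.scomp (h := fun s : ℝ => (s : ℂ)) t (ex_deriv L (t : ℂ)) h
  simpa [Function.comp_def] using this

lemma improve (L c : B) (l M : ℝ) (hL0 : 0 ≤ L) (hLl : L ≤ l • 1) (hc : IsSelfAdjoint c)
    (hM : ‖L - c‖ ≤ M) : ∃ s : ℝ, 0 < s ∧ s ≤ 1 ∧ s * (2 * M + 1) ≤ 1 / 2 ∧
      (1 - s * (2 * M + 1)) • (1 : B) ≤ ex L 1 * ex c ((-2 * s : ℝ)) * ex L 1 ∧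
      ex L 1 * ex c ((-2 * s : ℝ)) * ex L 1 ≤ ((1 + s * (2 * M + 1)) * Real.exp ((2 - 2 * s) * l)) • (1 : B) := by
  have hL : IsSelfAdjoint L := .of_nonneg hL0
  have hM0 : 0 ≤ M := (norm_nonneg _).trans hM
  let G : ℝ → B := fun s => ex L s * ex c ((-2 * s : ℝ)) * ex L s
  have hd1 : HasDerivAt (fun s : ℝ => ex L s) L 0 := by
    have := ex_derivR L 0
    simpa [ex_zero] using this
  have hd2 : HasDerivAt (fun s : ℝ => ex c ((-2 * s : ℝ))) ((-2 : ℝ) • c) 0 := by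
    have h1 : HasDerivAt (fun s : ℝ => ex c s) c (-2 * 0) := by
      have := ex_derivR c (-2 * 0)
      simpa [ex_zero] using this
    have h2 : HasDerivAt (fun s : ℝ => -2 * s) (-2) 0 := by
      simpa using (hasDerivAt_id (0:ℝ)).const_mul (-2)
    exact HasDerivAt.scomp (0:ℝ) h1 h2
  have hd : HasDerivAt G ((2:ℝ) • (L - c)) 0 := by
    have := (hd1.mul hd2).mul hd1
    refine HasDerivAt.congr_deriv (f := G) this ?_
    simp only [Pi.mul_apply, mul_zero, Complex.ofReal_zero, ex_zero, one_mul, mul_one]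
    module
  have hn : ‖(2:ℝ) • (L - c)‖ < 2 * M + 1 := by
    rw [norm_smul]; simp; linarith
  have he := hd.hasDerivWithinAt (s := Set.Ioi 0) |>.limsup_norm_slope_le hn
  have he2 : ∀ᶠ s : ℝ in 𝓝[>] 0, s < 1 / (2 * (2 * M + 1)) := by
    refine mem_nhdsWithin_of_mem_nhds (Iio_mem_nhds (by positivity))
  obtain ⟨s, ⟨h1, h2⟩, h3⟩ := (he.and he2).and self_mem_nhdsWithin |>.exists
  have h3 : 0 < s := h3
  have hm : s * (2 * M + 1) ≤ 1 / 2 := by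
    rw [lt_div_iff₀ (by positivity)] at h2
    nlinarith
  have hs1 : s ≤ 1 := by nlinarith
  refine ⟨s, h3, hs1, hm, ?_⟩
  have hG1 : ‖G s - 1‖ ≤ s * (2 * M + 1) := by
    have hG0 : G 0 = 1 := by simp [G, ex_zero]
    rw [hG0, sub_zero, Real.norm_eq_abs, abs_of_pos h3, inv_mul_lt_iff₀ h3] at h1
    exact h1.le
  have hGs : IsSelfAdjoint (G s) := by
    simp only [G, isSelfAdjoint_iff, star_mul, (ex_sa L hL s).star_eq, (ex_sa c hc (-2 * s)).star_eq, mul_assoc]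
  have hfac : ex L 1 * ex c ((-2 * s : ℝ)) * ex L 1 = ex L ((1 - s : ℝ)) * G s * ex L ((1 - s : ℝ)) := by
    have e1 : ex L 1 = ex L ((1 - s : ℝ)) * ex L s := by rw [← ex_add]; simp
    have e2 : ex L 1 = ex L s * ex L ((1 - s : ℝ)) := by rw [← ex_add]; simp
    conv_lhs => rw [mul_assoc, e2]; rw [← e2, e1]
    conv_lhs => rw [← e1]
    nth_rewrite 1 [e1]
    rw [e2]
    simp only [G, mul_assoc]
  obtain ⟨g1, g2⟩ := le_of_near_one (G s) hGs _ hG1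
  have hsa := ex_sa L hL (1 - s)
  have g1' := hsa.conjugate_le_conjugate g1
  have g2' := hsa.conjugate_le_conjugate g2
  have hE : ex L ((1 - s : ℝ)) * ex L ((1 - s : ℝ)) = ex L ((2 - 2 * s : ℝ)) := by
    rw [← ex_add]; congr 1; push_cast; ring
  obtain ⟨k1, k2⟩ := ex_le L l (2 - 2 * s) hLl hL0 (by linarith)
  rw [hfac]
  constructor
  · refine le_trans ?_ g1'
    rw [mul_smul_comm, smul_mul_assoc, mul_one, hE]
    exact smul_le_smul_of_nonneg_left k1 (by linarith)
  · refine g2'.trans ?_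
    rw [mul_smul_comm, smul_mul_assoc, mul_one, hE, mul_smul]
    exact smul_le_smul_of_nonneg_left k2 (by nlinarith)
end improve

section D
variable {A : Type u} [CStarAlgebra A]

/-- intertwiner -/
def Itw {E : Type*} [NormedAddCommGroup E] [InnerProductSpace ℂ E] [CompleteSpace E]
    (ρ : A →ₐ[ℂ] (E →L[ℂ] E)) (T : E →L[ℂ] E) : Prop := ∀ a, T * ρ a = star (ρ (star a)) * T

lemma step (ht : HTRP A) (C : ℝ) (hC : 0 ≤ C) : ∃ M : ℝ, 0 ≤ M ∧ ∀ (E : Type u) [NormedAddCommGroup E]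
    [InnerProductSpace ℂ E] [CompleteSpace E] (ρ : A →ₐ[ℂ] (E →L[ℂ] E)), (∀ a, ‖ρ a‖ ≤ C * ‖a‖) →
    ∀ (T : E →L[ℂ] E) (k : ℝ), 1 ≤ k → 1 ≤ T → T ≤ k • 1 → Itw ρ T →
    ∃ s : ℝ, 0 < s ∧ s ≤ 1 ∧ s * M ≤ 1 / 2 ∧ ∃ T' : E →L[ℂ] E, Itw ρ T' ∧ (1 - s * M) • 1 ≤ T' ∧
      T' ≤ ((1 + s * M) * Real.exp ((1 - s) * Real.log k)) • 1 := by
  obtain ⟨M, hM⟩ := unif_der ht C hC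
  refine ⟨2 * |M| + 1, by positivity, ?_⟩
  intro E _ _ _ ρ hρ T k hk h1 h2 hT
  obtain ⟨L, hL0, hLk, hLT⟩ := exists_log T k hk h1 h2
  have hL : IsSelfAdjoint L := .of_nonneg hL0
  have e1 : ex L 1 * ex L (-1) = 1 := ex_neg L 1
  have e2 : ex L (-1) * ex L 1 = 1 := ex_neg' L 1
  have e1' : ∀ x, ex L 1 * (ex L (-1) * x) = x := fun x => by rw [← mul_assoc, e1, one_mul]
  have e2' : ∀ x, ex L (-1) * (ex L 1 * x) = x := fun x => by rw [← mul_assoc, e2, one_mul]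
  let π : A →ₐ[ℂ] (E →L[ℂ] E) := AlgHom.ofLinearMap
    ((LinearMap.mulLeft ℂ (ex L 1)) ∘ₗ (LinearMap.mulRight ℂ (ex L (-1))) ∘ₗ ρ.toLinearMap)
    (by simp [e1]) (by intro a b; simp [mul_assoc, e2', e1'])
  have hπ : ∀ a, π a = ex L 1 * (ρ a * ex L (-1)) := fun a => rfl
  have hconj : ∀ a, ex L 1 * π a * ex L (-1) = star (ρ (star a)) := by
    intro a
    have := hT a
    rw [← hLT] at this
    calc _ = (ex L 1 * ex L 1 * ρ a) * ex L (-1) * ex L (-1) := by rw [hπ]; simp only [mul_assoc]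
      _ = _ := by rw [this]; simp only [mul_assoc, e1', e1, mul_one]
  have hconj2 : ∀ a, ex L (-1) * π a * ex L 1 = ρ a := by
    intro a
    rw [hπ]; simp only [mul_assoc, e2', e2, mul_one]
  have hst : ∀ a, star (π a) = π (star a) := by
    intro a
    have h := hconj (star a)
    rw [star_star] at h
    have s1 := ex_sa L hL 1
    have s2 := ex_sa L hL (-1)
    push_cast at s1 s2
    rw [hπ a, star_mul, star_mul, s1.star_eq, s2.star_eq, ← h]
    simp only [mul_assoc, e2', e2, mul_one]
  have hb : ∀ a, ‖π a‖ ≤ C * ‖a‖ ∧ ‖L * π a - π a * L‖ ≤ C * ‖a‖ := by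
    intro a
    refine strip L (π a) hL _ ?_ ?_
    · rw [hconj, norm_star]
      simpa using hρ (star a)
    · rw [hconj2]; exact hρ a
  obtain ⟨T0, hT0, hT0c⟩ := hM E π L (fun a => (hb a).1) (fun a => (hb a).2)
  set W : E →L[ℂ] E := (1/2 : ℝ) • (T0 + star T0) with hW
  have hWs : IsSelfAdjoint W := by
    rw [isSelfAdjoint_iff, hW, star_smul, star_add, star_star, add_comm]; simp
  have hWn : ‖W‖ ≤ |M| := by
    rw [hW, norm_smul]
    have := norm_add_le T0 (star T0)
    rw [norm_star] at this
    have h3 := hT0.trans (le_abs_self M)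
    norm_num
    linarith
  have hWc : ∀ a, W * π a - π a * W = L * π a - π a * L := by
    intro a
    have q1 := hT0c a
    have q2 := congrArg star (hT0c (star a))
    simp only [star_sub, star_mul, hst, star_star, hL.star_eq] at q2
    have q3 : star T0 * π a - π a * star T0 = L * π a - π a * L := by
      rw [← neg_inj, neg_sub, neg_sub]; exact q2
    have : W * π a - π a * W = (1/2:ℝ) • ((T0 * π a - π a * T0) + (star T0 * π a - π a * star T0)) := by
      rw [hW, smul_mul_assoc, mul_smul_comm, ← smul_sub]
      congr 1
      rw [add_mul, mul_add]; abel
    rw [this, q1, q3, ← two_smul ℝ, smul_smul]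
    norm_num
  have hcs : IsSelfAdjoint (L - W) := hL.sub hWs
  have hcomm : ∀ a, Commute (L - W) (π a) := by
    intro a
    have := hWc a
    rw [Commute, SemiconjBy, sub_mul, mul_sub, ← sub_eq_zero]
    rw [← sub_eq_zero] at this
    rw [← neg_eq_zero, ← this]; abel
  obtain ⟨s, hs0, hs1, hsm, k1, k2⟩ := improve L (L - W) (Real.log k / 2) |M| hL0 hLk hcs (by simpa using hWn)
  refine ⟨s, hs0, hs1, hsm, _, ?_, k1, ?_⟩
  · intro a
    have hc2 : Commute (ex (L - W) ((-2 * s : ℝ))) (π a) := by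
      letI : NormedAlgebra ℚ (E →L[ℂ] E) := NormedAlgebra.restrictScalars ℚ ℂ _
      exact ((hcomm a).smul_left _).exp_left
    rw [← hconj a, ← hconj2 a]
    have hc3 := hc2.eq
    set g := ex (L - W) ((-2 * s : ℝ))
    have hc4 : ∀ x, g * (π a * x) = π a * (g * x) := fun x => by rw [← mul_assoc, hc3, mul_assoc]
    simp only [mul_assoc, e1', e2', hc4]
  · convert k2 using 4
    ring

lemma pos_iff {E : Type*} [NormedAddCommGroup E] [InnerProductSpace ℂ E] [CompleteSpace E] (T : E →L[ℂ] E) :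
    0 ≤ T ↔ ∀ x, 0 ≤ ⟪T x, x⟫_ℂ := by
  rw [ContinuousLinearMap.nonneg_iff_isPositive, ContinuousLinearMap.isPositive_iff_complex]
  refine forall_congr' fun x => ?_
  rw [Complex.le_def, Complex.ext_iff]
  simp
  tauto

lemma smul_le_iff {E : Type*} [NormedAddCommGroup E] [InnerProductSpace ℂ E] [CompleteSpace E] (T : E →L[ℂ] E) (k : ℝ) :
    k • 1 ≤ T ↔ ∀ x, ((k * ‖x‖ ^ 2 : ℝ) : ℂ) ≤ ⟪T x, x⟫_ℂ := by
  rw [← sub_nonneg, pos_iff]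
  refine forall_congr' fun x => ?_
  rw [← sub_nonneg (a := ⟪T x, x⟫_ℂ)]
  simp [inner_sub_left, inner_smul_left_eq_smul, inner_self_eq_norm_sq_to_K]

lemma le_smul_iff {E : Type*} [NormedAddCommGroup E] [InnerProductSpace ℂ E] [CompleteSpace E] (T : E →L[ℂ] E) (k : ℝ) :
    T ≤ k • 1 ↔ ∀ x, ⟪T x, x⟫_ℂ ≤ ((k * ‖x‖ ^ 2 : ℝ) : ℂ) := by
  rw [← sub_nonneg, pos_iff]
  refine forall_congr' fun x => ?_
  rw [← sub_nonneg (b := ⟪T x, x⟫_ℂ)]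
  simp [inner_sub_left, inner_smul_left_eq_smul, inner_self_eq_norm_sq_to_K]

lemma norm_le_of_le {E : Type*} [NormedAddCommGroup E] [InnerProductSpace ℂ E] [CompleteSpace E] (T : E →L[ℂ] E) (k : ℝ)
    (hk : 0 ≤ k) (h0 : 0 ≤ T) (h : T ≤ k • 1) : ‖T‖ ≤ k := by
  refine (CStarAlgebra.norm_le_iff_le_algebraMap T hk h0).2 ?_
  rwa [Algebra.algebraMap_eq_smul_one]

lemma Itw_iff {E : Type*} [NormedAddCommGroup E] [InnerProductSpace ℂ E] [CompleteSpace E]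
    (ρ : A →ₐ[ℂ] (E →L[ℂ] E)) (T : E →L[ℂ] E) :
    Itw ρ T ↔ ∀ a x y, ⟪T (ρ a x), y⟫_ℂ = ⟪T x, ρ (star a) y⟫_ℂ := by
  have key : ∀ a x y, ⟪T x, ρ (star a) y⟫_ℂ = ⟪(star (ρ (star a)) * T) x, y⟫_ℂ := by
    intro a x y
    rw [ContinuousLinearMap.star_eq_adjoint]
    exact (ContinuousLinearMap.adjoint_inner_left _ _ _).symm
  constructor
  · intro h a x y
    rw [key, ← h a]; rfl
  · intro h a
    ext x
    refine ext_inner_right ℂ fun y => ?_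
    rw [← key, ← h]; rfl

theorem lemD (ht : HTRP A) (C : ℝ) (hC : 0 ≤ C) : ∃ D : ℝ, 1 ≤ D ∧ ∀ (E : Type u) [NormedAddCommGroup E]
    [InnerProductSpace ℂ E] [CompleteSpace E] (ρ : A →ₐ[ℂ] (E →L[ℂ] E)), (∀ a, ‖ρ a‖ ≤ C * ‖a‖) →
    ∀ (T : E →L[ℂ] E), 1 ≤ T → Itw ρ T → ∃ T' : E →L[ℂ] E, 1 ≤ T' ∧ T' ≤ D • 1 ∧ Itw ρ T' := by
  obtain ⟨M, hM0, hM⟩ := step ht C hC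
  refine ⟨Real.exp (4 * M), Real.one_le_exp (by positivity), ?_⟩
  intro E _ _ _ ρ hρ T h1 hT
  let K : Set ℝ := {k | 1 ≤ k ∧ ∃ T : E →L[ℂ] E, 1 ≤ T ∧ T ≤ k • 1 ∧ Itw ρ T}
  have hne : K.Nonempty := by
    refine ⟨max 1 ‖T‖, le_max_left _ _, T, h1, ?_, hT⟩
    have hs : IsSelfAdjoint T := .of_nonneg (zero_le_one.trans h1)
    have := hs.le_algebraMap_norm_self
    rw [Algebra.algebraMap_eq_smul_one] at this
    exact this.trans (smul_le_smul_of_nonneg_right (le_max_right _ _) zero_le_one)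
  have hbd : BddBelow K := ⟨1, fun k hk => hk.1⟩
  obtain ⟨f, hanti, hf, hfK⟩ := exists_seq_tendsto_sInf hne hbd
  set k0 := sInf K with hk0
  have hk01 : 1 ≤ k0 := le_csInf hne fun k hk => hk.1
  choose hf1 Tn hn1 hn2 hn3 using hfK
  let U : Ultrafilter ℕ := Filter.hyperfilter ℕ
  have hU : (U : Filter ℕ) ≤ atTop := Nat.hyperfilter_le_atTop
  obtain ⟨S, hS⟩ := wot_lim U Tn (f 0) (fun n => norm_le_of_le _ _ (by linarith [hf1 0])
    (zero_le_one.trans (hn1 n)) ((hn2 n).trans (smul_le_smul_of_nonneg_right (hanti (Nat.zero_le n)) zero_le_one)))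
  have hfU : Tendsto f U (𝓝 k0) := hf.mono_left hU
  have hS1 : 1 ≤ S := by
    rw [← one_smul ℝ (1 : E →L[ℂ] E), smul_le_iff]
    intro x
    refine ge_of_tendsto' (hS x x) fun n => ?_
    have := hn1 n
    rw [← one_smul ℝ (1 : E →L[ℂ] E), smul_le_iff] at this
    exact this x
  have hS2 : S ≤ k0 • 1 := by
    rw [le_smul_iff]
    intro x
    refine le_of_tendsto_of_tendsto' (hS x x) (Complex.continuous_ofReal.continuousAt.tendsto.comp (hfU.mul_const (‖x‖ ^ 2))) fun n => ?_
    exact (le_smul_iff _ _).1 (hn2 n) x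
  have hS3 : Itw ρ S := by
    rw [Itw_iff]
    intro a x y
    refine tendsto_nhds_unique (hS _ _) ?_
    refine (hS x (ρ (star a) y)).congr fun n => ?_
    exact ((Itw_iff _ _).1 (hn3 n) a x y).symm
  refine ⟨S, hS1, hS2.trans ?_, hS3⟩
  refine smul_le_smul_of_nonneg_right ?_ zero_le_one
  obtain ⟨s, hs0, hs1, hsM, T', hi, ha, hb⟩ := hM E ρ hρ S k0 hk01 hS1 hS2 hS3
  set x := s * M
  have hx0 : 0 ≤ x := by positivity
  have hx : 0 < 1 - x := by linarith
  have hl0 : 0 ≤ Real.log k0 := Real.log_nonneg hk01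
  have hmem : (1 - x)⁻¹ * ((1 + x) * Real.exp ((1 - s) * Real.log k0)) ∈ K := by
    refine ⟨?_, (1 - x)⁻¹ • T', ?_, ?_, ?_⟩
    · have := Real.one_le_exp (x := (1 - s) * Real.log k0) (mul_nonneg (by linarith) hl0)
      have h2 : 1 ≤ (1 - x)⁻¹ := (one_le_inv₀ hx).2 (by linarith)
      exact one_le_mul_of_one_le_of_one_le h2 (one_le_mul_of_one_le_of_one_le (by linarith) this)
    · have := smul_le_smul_of_nonneg_left ha (inv_pos.2 hx).le
      rwa [smul_smul, inv_mul_cancel₀ hx.ne', one_smul] at this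
    · have := smul_le_smul_of_nonneg_left hb (inv_pos.2 hx).le
      rwa [smul_smul] at this
    · intro a
      rw [smul_mul_assoc, hi a, mul_smul_comm]
  have hle := csInf_le hbd hmem
  rw [← hk0] at hle
  have h4 : (1 - x)⁻¹ * (1 + x) ≤ Real.exp (4 * x) := by
    refine le_trans ?_ (Real.add_one_le_exp _)
    rw [inv_mul_le_iff₀ hx]
    nlinarith
  have h5 : Real.exp (Real.log k0) ≤ Real.exp (4 * x + (1 - s) * Real.log k0) := by
    rw [Real.exp_log (by linarith), Real.exp_add]
    refine hle.trans ?_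
    rw [← mul_assoc]
    gcongr
  have h6 := Real.exp_le_exp.1 h5
  have h7 : Real.log k0 ≤ 4 * M := by
    have : s * Real.log k0 ≤ s * (4 * M) := by simp only [x] at h6; linarith
    exact le_of_mul_le_mul_left this hs0
  calc k0 = Real.exp (Real.log k0) := (Real.exp_log (by linarith)).symm
    _ ≤ _ := Real.exp_le_exp.2 h7
end D
end TRP

set_option linter.unusedSectionVars false
set_option linter.unusedSimpArgs false
namespace TRP
open scoped ComplexOrder InnerProductSpace
open Filter Topology
universe u

section Z
variable {A : Type u} [CStarAlgebra A] {H : Type u} [NormedAddCommGroup H] [InnerProductSpace ℂ H] [CompleteSpace H]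

/-- restriction of a representation to an invariant subspace -/
noncomputable def resRep (θ : A →ₐ[ℂ] (H →L[ℂ] H)) (V : Submodule ℂ H) (hi : ∀ a, ∀ x ∈ V, θ a x ∈ V) :
    A →ₐ[ℂ] (V →L[ℂ] V) := AlgHom.ofLinearMap
  { toFun := fun a => ((θ a).comp V.subtypeL).codRestrict V (fun x => hi a x x.2)
    map_add' := by intro a b; ext x; simp; rfl
    map_smul' := by intro a b; ext x; simp; rfl }
  (by ext x; simp) (by intro a b; ext x; simp; rfl)

lemma resRep_apply (θ : A →ₐ[ℂ] (H →L[ℂ] H)) (V : Submodule ℂ H) (hi : ∀ a, ∀ x ∈ V, θ a x ∈ V) (a : A) (x : V) :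
    ((resRep θ V hi a x : V) : H) = θ a x := rfl

lemma proj_inner (V : Submodule ℂ H) [CompleteSpace V] (x : H) (y : V) :
    ⟪V.orthogonalProjectionOnto x, y⟫_ℂ = ⟪x, (y : H)⟫_ℂ := by
  simp

lemma good_unif (C D : ℝ) (hD1 : 1 ≤ D)
    (hD : ∀ (E : Type u) [NormedAddCommGroup E]
    [InnerProductSpace ℂ E] [CompleteSpace E] (ρ : A →ₐ[ℂ] (E →L[ℂ] E)), (∀ a, ‖ρ a‖ ≤ C * ‖a‖) →
    ∀ (T : E →L[ℂ] E), 1 ≤ T → Itw ρ T → ∃ T' : E →L[ℂ] E, 1 ≤ T' ∧ T' ≤ D • 1 ∧ Itw ρ T')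
    (θ : A →ₐ[ℂ] (H →L[ℂ] H)) (hC0 : 0 ≤ C) (hC : ∀ a, ‖θ a‖ ≤ C * ‖a‖) (V : Submodule ℂ H)
    (hV : IsClosed (V : Set H)) (hi : ∀ a, ∀ x ∈ V, θ a x ∈ V) (hg : Good θ V) :
    ∃ T : H →L[ℂ] H, 0 ≤ T ∧ ‖T‖ ≤ D ∧ (∀ x ∈ V, ((‖x‖ ^ 2 : ℝ) : ℂ) ≤ ⟪T x, x⟫_ℂ) ∧
      ∀ a, ∀ x ∈ V, ∀ y ∈ V, ⟪T (θ a x), y⟫_ℂ = ⟪T x, θ (star a) y⟫_ℂ := by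
  haveI : CompleteSpace V := hV.completeSpace_coe
  obtain ⟨T, hT, c, hc, h1, h2⟩ := hg
  let P := V.orthogonalProjectionOnto
  have hT0 : 0 ≤ T := (ContinuousLinearMap.nonneg_iff_isPositive T).2 hT
  let TV : V →L[ℂ] V := c⁻¹ • (P.comp (T.comp V.subtypeL))
  have hTV : ∀ x y : V, ⟪TV x, y⟫_ℂ = ((c⁻¹ : ℝ) : ℂ) * ⟪T x, (y : H)⟫_ℂ := by
    intro x y
    have : TV x = ((c⁻¹ : ℝ) : ℂ) • P (T x) := by rw [Complex.coe_smul]; rfl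
    rw [this, inner_smul_left, proj_inner]; simp
  obtain ⟨T', k1, k2, k3⟩ := hD V (resRep θ V hi) (by
      intro a
      refine ContinuousLinearMap.opNorm_le_bound _ (by positivity) fun x => ?_
      exact (θ a).le_of_opNorm_le (hC a) x) TV (by
      rw [← one_smul ℝ (1 : V →L[ℂ] V), smul_le_iff]
      intro x
      have p := (pos_iff T).1 hT0 x
      have q := h1 x x.2
      rw [hTV]
      rw [Complex.le_def] at p ⊢
      simp only [Complex.re_ofReal_mul, Complex.im_ofReal_mul, Complex.ofReal_re, Complex.ofReal_im]
      refine ⟨?_, ?_⟩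
      · rw [le_inv_mul_iff₀ hc]; simpa using q
      · rw [← p.2]; simp) (by
      rw [Itw_iff]
      intro a x y
      rw [hTV, hTV, resRep_apply, resRep_apply, h2 a x x.2 y y.2])
  let R : H →L[ℂ] H := V.subtypeL.comp (T'.comp P)
  have hR : ∀ x y : H, ⟪R x, y⟫_ℂ = ⟪T' (P x), P y⟫_ℂ := by
    intro x y
    have := proj_inner V y (T' (P x))
    rw [← inner_conj_symm, ← inner_conj_symm (T' (P x))]
    exact congrArg _ this.symm
  have hP : ∀ x (hx : x ∈ V), P x = ⟨x, hx⟩ := fun x hx =>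
    Submodule.orthogonalProjectionOnto_mem_subspace_eq_self (K := V) ⟨x, hx⟩
  refine ⟨R, ?_, ?_, ?_, ?_⟩
  · rw [pos_iff]
    intro x
    rw [hR]
    exact (pos_iff T').1 (zero_le_one.trans k1) (P x)
  · have hn : ‖T'‖ ≤ D := norm_le_of_le _ _ (by linarith) (zero_le_one.trans k1) k2
    refine ContinuousLinearMap.opNorm_le_bound _ (by linarith) fun x => ?_
    have e1 : ‖R x‖ = ‖T' (P x)‖ := rfl
    rw [e1]
    refine (T'.le_of_opNorm_le hn _).trans ?_
    have : ‖P x‖ ≤ ‖x‖ := by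
      have := P.le_of_opNorm_le V.orthogonalProjectionOnto_norm_le x
      simpa using this
    gcongr
  · intro x hx
    rw [hR, hP x hx]
    rw [← one_smul ℝ (1 : V →L[ℂ] V), smul_le_iff] at k1
    simpa using k1 ⟨x, hx⟩
  · intro a x hx y hy
    rw [hR, hR, hP x hx, hP y hy, hP _ (hi a x hx), hP _ (hi (star a) y hy)]
    exact (Itw_iff _ _).1 k3 a ⟨x, hx⟩ ⟨y, hy⟩

lemma chain_good (θ : A →ₐ[ℂ] (H →L[ℂ] H)) (D : ℝ) (c : Set (Submodule ℂ H)) (hc : IsChain (· ≤ ·) c)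
    (hne : c.Nonempty) (hi : ∀ V ∈ c, ∀ a, ∀ x ∈ V, θ a x ∈ V)
    (hT : ∀ V ∈ c, ∃ T : H →L[ℂ] H, 0 ≤ T ∧ ‖T‖ ≤ D ∧ (∀ x ∈ V, ((‖x‖ ^ 2 : ℝ) : ℂ) ≤ ⟪T x, x⟫_ℂ) ∧
      ∀ a, ∀ x ∈ V, ∀ y ∈ V, ⟪T (θ a x), y⟫_ℂ = ⟪T x, θ (star a) y⟫_ℂ) :
    (∀ a, ∀ x ∈ (sSup c).topologicalClosure, θ a x ∈ (sSup c).topologicalClosure) ∧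
    Good θ (sSup c).topologicalClosure := by
  have hdir : DirectedOn (· ≤ ·) c := hc.directedOn
  have hmem : ∀ x, x ∈ sSup c ↔ ∃ V ∈ c, x ∈ V := fun x => Submodule.mem_sSup_of_directed hne hdir
  haveI : Nonempty c := hne.to_subtype
  haveI : IsDirectedOrder c := ⟨fun a b => by
    obtain ⟨d, hd, h1, h2⟩ := hdir a a.2 b b.2
    exact ⟨⟨d, hd⟩, h1, h2⟩⟩
  have hinv : ∀ a, ∀ x ∈ sSup c, θ a x ∈ sSup c := by
    intro a x hx
    obtain ⟨V, hV, hx⟩ := (hmem x).1 hx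
    exact (hmem _).2 ⟨V, hV, hi V hV a x hx⟩
  have hcl : ∀ (P : H → Prop), IsClosed {x | P x} → (∀ x ∈ sSup c, P x) → ∀ x ∈ (sSup c).topologicalClosure, P x := by
    intro P hP h x hx
    exact closure_minimal (s := ((sSup c : Submodule ℂ H) : Set H)) (t := {x | P x}) h hP hx
  choose T h0 hn h1 h2 using fun V : c => hT V V.2
  let U : Ultrafilter c := Ultrafilter.of atTop
  have hU : (U : Filter c) ≤ atTop := Ultrafilter.of_le _
  obtain ⟨S, hS⟩ := wot_lim U T D hn
  have hS0 : 0 ≤ S := by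
    rw [pos_iff]
    intro x
    exact ge_of_tendsto' (hS x x) fun i => (pos_iff _).1 (h0 i) x
  have hS1 : ∀ x ∈ sSup c, ((‖x‖ ^ 2 : ℝ) : ℂ) ≤ ⟪S x, x⟫_ℂ := by
    intro x hx
    obtain ⟨V, hV, hx⟩ := (hmem x).1 hx
    refine ge_of_tendsto (hS x x) (hU ?_)
    filter_upwards [eventually_ge_atTop (⟨V, hV⟩ : c)] with i hi
    exact h1 i x (hi hx)
  have hS2 : ∀ a, ∀ x ∈ sSup c, ∀ y ∈ sSup c, ⟪S (θ a x), y⟫_ℂ = ⟪S x, θ (star a) y⟫_ℂ := by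
    intro a x hx y hy
    obtain ⟨V, hV, hx⟩ := (hmem x).1 hx
    obtain ⟨W, hW, hy⟩ := (hmem y).1 hy
    refine tendsto_nhds_unique (hS _ _) ((hS x (θ (star a) y)).congr' (hU ?_))
    filter_upwards [eventually_ge_atTop (⟨V, hV⟩ : c), eventually_ge_atTop (⟨W, hW⟩ : c)] with i hi hj
    exact (h2 i a x (hi hx) y (hj hy)).symm
  refine ⟨fun a => hcl (fun x => θ a x ∈ (sSup c).topologicalClosure) ?_ ?_, S,
    (ContinuousLinearMap.nonneg_iff_isPositive S).1 hS0, 1, one_pos, ?_, ?_⟩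
  · exact (sSup c).isClosed_topologicalClosure.preimage (θ a).continuous
  · intro x hx
    exact (sSup c).le_topologicalClosure (hinv a x hx)
  · refine hcl _ (isClosed_le (by fun_prop) (by fun_prop)) fun x hx => ?_
    have := (Complex.le_def.1 (hS1 x hx)).1
    simpa [-Complex.ofReal_pow, Complex.ofReal_re] using this
  · intro a x hx
    refine hcl _ (isClosed_eq (by fun_prop) (by fun_prop)) fun y hy => ?_
    revert x
    refine hcl _ (isClosed_eq (by fun_prop) (by fun_prop)) fun x hx => ?_
    exact hS2 a x hx y hy

lemma enlarge (θ : A →ₐ[ℂ] (H →L[ℂ] H)) (V X : Submodule ℂ H) (Q0 : H →L[ℂ] H) (hQ : IsProj θ V Q0)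
    (hV : Good θ V) (hX : Good θ X) : Good θ (X.comap ((1 - Q0 : H →L[ℂ] H) : H →ₗ[ℂ] H)) := by
  obtain ⟨T, hT, c, hc, h1, h2⟩ := hV
  obtain ⟨R, hR, d, hd, k1, k2⟩ := hX
  obtain ⟨q1, q2, q3⟩ := hQ
  set Q : H →L[ℂ] H := 1 - Q0 with hQd
  have q3' : ∀ a x, Q (θ a x) = θ a (Q x) := by
    intro a x; simp [hQd, q3]
  let T' : H →L[ℂ] H := star Q0 * T * Q0 + star Q * R * Q
  have hT' : ∀ x y, ⟪T' x, y⟫_ℂ = ⟪T (Q0 x), Q0 y⟫_ℂ + ⟪R (Q x), Q y⟫_ℂ := by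
    intro x y
    have e : T' x = (ContinuousLinearMap.adjoint Q0) (T (Q0 x)) + (ContinuousLinearMap.adjoint Q) (R (Q x)) := rfl
    rw [e, inner_add_left, ContinuousLinearMap.adjoint_inner_left, ContinuousLinearMap.adjoint_inner_left]
  have hT0 : 0 ≤ T := (ContinuousLinearMap.nonneg_iff_isPositive T).2 hT
  have hR0 : 0 ≤ R := (ContinuousLinearMap.nonneg_iff_isPositive R).2 hR
  refine ⟨T', ?_, min c d / 2, by positivity, ?_, ?_⟩
  · rw [← ContinuousLinearMap.nonneg_iff_isPositive, pos_iff]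
    intro x
    rw [hT']
    exact add_nonneg ((pos_iff T).1 hT0 _) ((pos_iff R).1 hR0 _)
  · intro x hx
    have hx : Q x ∈ X := hx
    rw [hT', Complex.add_re]
    have a1 := h1 (Q0 x) (q1 x)
    have a2 := k1 (Q x) hx
    have a3 : x = Q0 x + Q x := by simp [hQd]
    have a4 : ‖x‖ ≤ ‖Q0 x‖ + ‖Q x‖ := by
      conv_lhs => rw [a3]
      exact norm_add_le _ _
    have a5 : ‖x‖ ^ 2 ≤ 2 * (‖Q0 x‖ ^ 2 + ‖Q x‖ ^ 2) := by
      nlinarith [norm_nonneg x, sq_nonneg (‖Q0 x‖ - ‖Q x‖), norm_nonneg (Q0 x), norm_nonneg (Q x)]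
    have a6 : min c d * ‖Q0 x‖ ^ 2 ≤ c * ‖Q0 x‖ ^ 2 := by gcongr; exact min_le_left _ _
    have a7 : min c d * ‖Q x‖ ^ 2 ≤ d * ‖Q x‖ ^ 2 := by gcongr; exact min_le_right _ _
    have a8 : 0 < min c d := by positivity
    nlinarith
  · intro a x hx y hy
    rw [hT', hT', q3, q3', q3, q3', h2 a _ (q1 x) _ (q1 y), k2 a (Q x) hx (Q y) hy]

end Z

lemma good_top {A : Type u} [CStarAlgebra A] [PartialOrder A] [StarOrderedRing A] (ht : HTRP A)
    {H : Type u} [NormedAddCommGroup H] [InnerProductSpace ℂ H] [CompleteSpace H]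
    (θ : A →ₐ[ℂ] (H →L[ℂ] H)) (C : ℝ) (hC0 : 0 ≤ C) (hC : ∀ a, ‖θ a‖ ≤ C * ‖a‖) : Good θ ⊤ := by
  obtain ⟨D, hD1, hD⟩ := lemD ht C hC0
  let Fam : Set (Submodule ℂ H) := {V | IsClosed (V : Set H) ∧ (∀ a, ∀ x ∈ V, θ a x ∈ V) ∧ Good θ V}
  obtain ⟨V, hVm⟩ := zorn_le₀ Fam (by
    intro c hcs hc
    rcases c.eq_empty_or_nonempty with rfl | hne
    · refine ⟨⊥, ⟨by simp, by simp, 0, ContinuousLinearMap.isPositive_zero, 1, one_pos, by simp, by simp⟩, by simp⟩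
    · have := chain_good θ D c hc hne (fun V hV => (hcs hV).2.1) (fun V hV =>
        good_unif C D hD1 hD θ hC0 hC V (hcs hV).1 (hcs hV).2.1 (hcs hV).2.2)
      exact ⟨_, ⟨(sSup c).isClosed_topologicalClosure, this.1, this.2⟩, fun z hz =>
        (le_sSup hz).trans (sSup c).le_topologicalClosure⟩)
  obtain ⟨hVc, hVi, hVg⟩ := hVm.prop
  by_cases htop : V = ⊤
  · rwa [htop] at hVg
  exfalso
  obtain ⟨x, hx⟩ : ∃ x, x ∉ V := by
    by_contra! h
    exact htop (eq_top_iff.2 fun x _ => h x)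
  obtain ⟨Q0, hQ⟩ := proj_exists ht θ (cont_of_bd θ C hC) V hVc hVi
  set w := x - Q0 x with hw
  have hQw : Q0 w = 0 := by
    rw [hw, map_sub, hQ.2.1 _ (hQ.1 x), sub_self]
  have hw0 : w ≠ 0 := by
    intro h
    rw [hw, sub_eq_zero] at h
    exact hx (h ▸ hQ.1 x)
  set X := cyc θ C hC w
  have hg := enlarge θ V X Q0 hQ hVg (cyc_good θ C hC0 hC w)
  set W := X.comap ((1 - Q0 : H →L[ℂ] H) : H →ₗ[ℂ] H) with hWd
  have hWm : ∀ y, y ∈ W ↔ y - Q0 y ∈ X := by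
    intro y; simp [hWd]
  have hWS : W ∈ Fam := by
    refine ⟨(cyc_closed θ C hC w).preimage (1 - Q0 : H →L[ℂ] H).continuous, ?_, hg⟩
    intro a y hy
    rw [hWm] at hy ⊢
    rw [hQ.2.2, ← map_sub]
    exact cyc_inv θ C hC w a _ hy
  have hVW : V ≤ W := by
    intro y hy
    rw [hWm, hQ.2.1 y hy, sub_self]
    exact X.zero_mem
  have hWV : W ≤ V := hVm.le_of_ge hWS hVW
  have hwW : w ∈ W := by
    rw [hWm, hQw, sub_zero]
    have := mem_cyc θ C hC w 1
    simpa using this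
  have := hQ.2.1 w (hWV hwW)
  rw [hQw] at this
  exact hw0 this.symm

theorem main {A : Type u} [CStarAlgebra A] (ht : HTRP A)
    {H : Type u} [NormedAddCommGroup H] [InnerProductSpace ℂ H] [CompleteSpace H]
    (θ : A →ₐ[ℂ] (H →L[ℂ] H)) (hθ : Continuous θ) : ∃ S : (H →L[ℂ] H)ˣ, ∀ a : A,
      (S : H →L[ℂ] H) * θ (star a) * ((S⁻¹ : (H →L[ℂ] H)ˣ) : H →L[ℂ] H)
        = star ((S : H →L[ℂ] H) * θ a * ((S⁻¹ : (H →L[ℂ] H)ˣ) : H →L[ℂ] H)) := by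
  letI := CStarAlgebra.spectralOrder A
  haveI := CStarAlgebra.spectralOrderedRing A
  let θL : A →L[ℂ] (H →L[ℂ] H) := ⟨θ.toLinearMap, hθ⟩
  obtain ⟨T, hT, c, hc, h1, h2⟩ := good_top ht θ ‖θL‖ (norm_nonneg _) (fun a => θL.le_opNorm a)
  have hT0 : 0 ≤ T := (ContinuousLinearMap.nonneg_iff_isPositive T).2 hT
  have hle : c • 1 ≤ T := by
    rw [smul_le_iff]
    intro x
    have p := (pos_iff T).1 hT0 x
    have q := h1 x trivial
    rw [Complex.le_def] at p ⊢
    exact ⟨by simpa only [Complex.ofReal_re] using q, by rw [← p.2, Complex.ofReal_im]; rfl⟩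
  have hI : Itw θ T := (Itw_iff _ _).2 fun a x y => h2 a x trivial y trivial
  obtain ⟨r, s, hr, hs, hrr, hrs, hsr⟩ := sqrt_inv T c hc hle
  refine ⟨⟨r, s, hrs, hsr⟩, fun a => ?_⟩
  show r * θ (star a) * s = star (r * θ a * s)
  have h := hI (star a)
  rw [star_star, ← hrr] at h
  rw [star_mul, star_mul, hr.star_eq, hs.star_eq]
  calc r * θ (star a) * s = s * (r * r * θ (star a)) * s := by
        simp only [← mul_assoc]; rw [hsr, one_mul]
    _ = _ := by rw [h]; simp only [mul_assoc]; rw [hrs, mul_one]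
end TRP


universe u

/-- a C*-algebra with the total reduction property has the similarity
property: every continuous representation on a Hilbert space is similar to a
*-representation. -/
theorem cstar_totalReduction_implies_similarity
    {A : Type u} [NormedRing A] [StarRing A] [CStarRing A] [NormedAlgebra ℂ A]
    [CompleteSpace A] [StarModule ℂ A]
    (htrp : ∀ (K : Type u) [NormedAddCommGroup K] [InnerProductSpace ℂ K] [CompleteSpace K],
      ∀ θ : A →ₐ[ℂ] (K →L[ℂ] K), Continuous (⇑θ) →
      ∀ V : Submodule ℂ K, IsClosed (V : Set K) → (∀ a : A, ∀ x ∈ V, θ a x ∈ V) →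
      ∃ W : Submodule ℂ K, IsClosed (W : Set K) ∧ (∀ a : A, ∀ x ∈ W, θ a x ∈ W) ∧
        V ⊓ W = ⊥ ∧ V ⊔ W = ⊤)
    {H : Type u} [NormedAddCommGroup H] [InnerProductSpace ℂ H] [CompleteSpace H]
    (θ : A →ₐ[ℂ] (H →L[ℂ] H)) (hθ : Continuous (⇑θ)) :
    ∃ S : (H →L[ℂ] H)ˣ, ∀ a : A,
      (S : H →L[ℂ] H) * θ (star a) * ((S⁻¹ : (H →L[ℂ] H)ˣ) : H →L[ℂ] H)
        = star ((S : H →L[ℂ] H) * θ a * ((S⁻¹ : (H →L[ℂ] H)ˣ) : H →L[ℂ] H)) := by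
  let _ : CStarAlgebra A := { }
  exact TRP.main htrp θ hθ
end

section
/- Let A ⊆ B(H) be an operator algebra with the complete reduction property (H^(∞) has the reduction property). If V₁, V₂ are closed A-submodules of H and there exists a non-zero bounded A-module map from V₁ to V₂, then there exists a non-zero bounded A-module map from V₂ to V₁. -/
/-- Coordinate evaluation on `ℓ²(H)` as a continuous linear map. -/
noncomputable def evalL2 (H : Type*) [NormedAddCommGroup H] [InnerProductSpace ℂ H] (i : ℕ) :
    lp (fun _ : ℕ => H) 2 →L[ℂ] H :=
  { toFun := fun x => x i
    map_add' := fun _ _ => rfl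
    map_smul' := fun _ _ => rfl
    cont := (lp.lipschitzWith_one_eval 2 i).continuous }

theorem exists_amp {H : Type*} [NormedAddCommGroup H] [InnerProductSpace ℂ H]
    (a : H →L[ℂ] H) (x : lp (fun _ : ℕ => H) 2) :
    ∃ y : lp (fun _ : ℕ => H) 2, ∀ i, y i = a (x i) := by
  have h : Memℓp (fun i => a (x i)) 2 := by
    refine Memℓp.mono' (g := fun i => ((‖a‖ : ℂ) • x) i) (lp.memℓp _) fun i => ?_
    have h : ((‖a‖ : ℂ) • x) i = (‖a‖ : ℂ) • x i := rfl
    rw [h, norm_smul, Complex.norm_real, norm_norm]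
    exact a.le_opNorm (x i)
  exact ⟨⟨_, h⟩, fun i => rfl⟩

/-- for an operator algebra `A ⊆ B(H)` with the complete reduction property
(the amplification `H ⊗ ℓ²` has the reduction property), the intertwining relation between
closed submodules is symmetric: if there is a non-zero bounded module map `V₁ → V₂` then
there is a non-zero bounded module map `V₂ → V₁`. -/
theorem intertwining_symmetric
    {H : Type*} [NormedAddCommGroup H] [InnerProductSpace ℂ H] [CompleteSpace H]
    (A : Subalgebra ℂ (H →L[ℂ] H))
    (hcrp : ∀ V : Submodule ℂ (lp (fun _ : ℕ => H) 2), IsClosed (V : Set (lp (fun _ : ℕ => H) 2)) →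
      (∀ a ∈ A, ∀ ξ ∈ V, ∀ η : lp (fun _ : ℕ => H) 2, (∀ i, η i = a (ξ i)) → η ∈ V) →
      ∃ W : Submodule ℂ (lp (fun _ : ℕ => H) 2), IsClosed (W : Set (lp (fun _ : ℕ => H) 2)) ∧
        (∀ a ∈ A, ∀ ξ ∈ W, ∀ η : lp (fun _ : ℕ => H) 2, (∀ i, η i = a (ξ i)) → η ∈ W) ∧
        V ⊓ W = ⊥ ∧ V ⊔ W = ⊤)
    (V₁ V₂ : Submodule ℂ H)
    (h1c : IsClosed (V₁ : Set H)) (h2c : IsClosed (V₂ : Set H))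
    (h1inv : ∀ a ∈ A, ∀ x ∈ V₁, a x ∈ V₁) (h2inv : ∀ a ∈ A, ∀ x ∈ V₂, a x ∈ V₂)
    (T : V₁ →L[ℂ] H) (hT0 : T ≠ 0) (hTrange : ∀ ξ : V₁, T ξ ∈ V₂)
    (hTmod : ∀ a ∈ A, ∀ (ξ : V₁) (h : a (ξ : H) ∈ V₁), T ⟨a ξ, h⟩ = a (T ξ)) :
    ∃ S : V₂ →L[ℂ] H, S ≠ 0 ∧ (∀ ξ : V₂, S ξ ∈ V₁) ∧
      ∀ a ∈ A, ∀ (ξ : V₂) (h : a (ξ : H) ∈ V₂), S ⟨a ξ, h⟩ = a (S ξ) := by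
  classical
  by_contra hno
  push Not at hno
  have : CompleteSpace V₁ := h1c.completeSpace_coe
  obtain ⟨T', hT'⟩ : ∃ T' : H →L[ℂ] H, ∀ ξ : V₁, T' ξ = T ξ :=
    ⟨T ∘L V₁.orthogonalProjectionOnto, fun ξ => by simp⟩
  have hT'mod : ∀ a ∈ A, ∀ x ∈ V₁, T' (a x) = a (T' x) := fun a ha x hx => by
    have h := h1inv a ha x hx
    have := hTmod a ha ⟨x, hx⟩ h
    rw [← hT', ← hT'] at this
    exact this
  -- the direct sum of the graphs of `(n+1) T`
  let V : Submodule ℂ (lp (fun _ : ℕ => H) 2) :=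
    { carrier := {ξ | ∀ n : ℕ, ξ (2 * n) ∈ V₁ ∧ ξ (2 * n + 1) = ((n : ℂ) + 1) • T' (ξ (2 * n))}
      add_mem' := by
        intro x y hx hy n
        refine ⟨V₁.add_mem (hx n).1 (hy n).1, ?_⟩
        simp [(hx n).2, (hy n).2]
      zero_mem' := by
        intro n
        simp
      smul_mem' := by
        intro c x hx n
        refine ⟨V₁.smul_mem c (hx n).1, ?_⟩
        simp [(hx n).2, smul_comm c] }
  have hVmem : ∀ ξ, ξ ∈ V ↔ ∀ n : ℕ, ξ (2 * n) ∈ V₁ ∧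
      ξ (2 * n + 1) = ((n : ℂ) + 1) • T' (ξ (2 * n)) := fun ξ => Iff.rfl
  have hVc : IsClosed (V : Set (lp (fun _ : ℕ => H) 2)) := by
    have : (V : Set (lp (fun _ : ℕ => H) 2)) = ⋂ n : ℕ, ((evalL2 H (2 * n)) ⁻¹' (V₁ : Set H)) ∩
        {ξ | evalL2 H (2 * n + 1) ξ = ((n : ℂ) + 1) • T' (evalL2 H (2 * n) ξ)} := by
      ext ξ
      simp only [Set.mem_iInter]
      exact Iff.rfl
    rw [this]
    refine isClosed_iInter fun n => (h1c.preimage (evalL2 H (2 * n)).continuous).inter ?_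
    exact isClosed_eq (by fun_prop) (by fun_prop)
  have hVinv : ∀ a ∈ A, ∀ ξ ∈ V, ∀ η : lp (fun _ : ℕ => H) 2, (∀ i, η i = a (ξ i)) → η ∈ V := by
    intro a ha ξ hξ η hη n
    rw [hη, hη]
    refine ⟨h1inv a ha _ (hξ n).1, ?_⟩
    rw [(hξ n).2, hT'mod a ha _ (hξ n).1, map_smul]
  obtain ⟨W, hWc, hWinv, hinf, hsup⟩ := hcrp V hVc hVinv
  have hc : IsCompl V W := ⟨disjoint_iff.2 hinf, codisjoint_iff.2 hsup⟩
  have htc := Submodule.IsCompl.isTopCompl_of_isClosed hc hVc hWc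
  obtain ⟨P, hPV, hPid, hPW⟩ : ∃ P : lp (fun _ : ℕ => H) 2 →L[ℂ] lp (fun _ : ℕ => H) 2,
      (∀ x, P x ∈ V) ∧ (∀ x ∈ V, P x = x) ∧ ∀ x ∈ W, P x = 0 :=
    ⟨V.projectionL W htc, fun x => by simp, fun x hx => by simpa using hx,
      fun x hx => by simpa using hx⟩
  have hPker : ∀ x, x - P x ∈ W := by
    intro x
    obtain ⟨v, hv, w, hw, rfl⟩ := Submodule.mem_sup.1 (hsup ▸ Submodule.mem_top : x ∈ V ⊔ W)
    rw [map_add, hPid v hv, hPW w hw]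
    simpa using hw
  have hPmod : ∀ a ∈ A, ∀ ξ η : lp (fun _ : ℕ => H) 2, (∀ i, η i = a (ξ i)) →
      ∀ i, P η i = a (P ξ i) := by
    intro a ha ξ η h i
    obtain ⟨y, hy⟩ := exists_amp a (P ξ)
    have hyV := hVinv a ha _ (hPV ξ) y hy
    have hW : η - y ∈ W := hWinv a ha _ (hPker ξ) _ fun j => by simp [h, hy]
    have := hPW _ hW
    rw [map_sub, hPid y hyV, sub_eq_zero] at this
    rw [this, hy]
  -- the vanishing of all module maps kills the odd coordinates
  have hkill : ∀ k, ∀ y ∈ V₂, P (lp.single 2 k y) = 0 := by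
    intro k y hy
    have hev : ∀ m, P (lp.single 2 k y) (2 * m) = 0 := by
      intro m
      let S : V₂ →L[ℂ] H := (evalL2 H (2 * m)) ∘L P ∘L
        (lp.singleContinuousLinearMap ℂ (fun _ : ℕ => H) 2 k) ∘L V₂.subtypeL
      have hS : ∀ ξ : V₂, S ξ = P (lp.single 2 k (ξ : H)) (2 * m) := fun ξ => rfl
      have hS0 : S = 0 := by
        by_contra hne
        obtain ⟨a, ha, ξ, h, hn⟩ := hno S hne fun ξ => (hPV _ m).1
        apply hn
        rw [hS, hS]
        refine hPmod a ha _ _ (fun i => ?_) _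
        by_cases hi : i = k
        · subst hi
          simp
        · simp [hi]
      have := hS ⟨y, hy⟩
      rw [hS0] at this
      exact this.symm
    ext i
    rcases Nat.even_or_odd' i with ⟨m, rfl | rfl⟩
    · simpa using hev m
    · rw [(hPV _ m).2, hev m]
      simp
  obtain ⟨x, hx⟩ : ∃ x, T x ≠ 0 := by
    by_contra h
    push Not at h
    exact hT0 (ContinuousLinearMap.ext h)
  have hb : ∀ n : ℕ, ((n : ℝ) + 1) * ‖T x‖ ≤ ‖P‖ * ‖x‖ := by
    intro n
    let u : lp (fun _ : ℕ => H) 2 := lp.single 2 (2 * n) (x : H)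
    let w : lp (fun _ : ℕ => H) 2 := lp.single 2 (2 * n + 1) (((n : ℂ) + 1) • T x)
    have huw : ∀ i, (u + w) i = (if i = 2 * n then (x : H) else 0) +
        (if i = 2 * n + 1 then ((n : ℂ) + 1) • T x else 0) := fun i => by
      rw [← Pi.single_apply, ← Pi.single_apply]
      rfl
    have hv : u + w ∈ V := by
      intro m
      have h1 : (u + w) (2 * m) = if m = n then (x : H) else 0 := by
        have : 2 * m ≠ 2 * n + 1 := by omega
        simp [huw, this]
      have h2 : (u + w) (2 * m + 1) = if m = n then ((n : ℂ) + 1) • T x else 0 := by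
        have : 2 * m + 1 ≠ 2 * n := by omega
        simp [huw, this]
      rw [h1, h2]
      by_cases hmn : m = n
      · subst hmn
        simp [hT']
      · simp [hmn]
    have hw : P w = 0 := hkill _ _ (V₂.smul_mem _ (hTrange x))
    have hPu : P u = u + w := by
      have := hPid _ hv
      rwa [map_add, hw, add_zero] at this
    have hcoord : (P u) (2 * n + 1) = ((n : ℂ) + 1) • T x := by
      rw [hPu, huw]
      simp
    have h1 : ‖(P u) (2 * n + 1)‖ ≤ ‖P u‖ := lp.norm_apply_le_norm (by norm_num) _ _
    have h2 : ‖P u‖ ≤ ‖P‖ * ‖u‖ := P.le_opNorm u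
    have h3 : ‖u‖ = ‖x‖ := lp.norm_single (by norm_num) _ _
    have h4 : ‖(n : ℂ) + 1‖ = (n : ℝ) + 1 := by
      exact_mod_cast Complex.norm_natCast (n + 1)
    rw [hcoord, norm_smul, h4] at h1
    rw [h3] at h2
    exact h1.trans h2
  have hpos : 0 < ‖T x‖ := norm_pos_iff.2 hx
  obtain ⟨n, hn⟩ := exists_nat_gt (‖P‖ * ‖x‖ / ‖T x‖)
  rw [div_lt_iff₀ hpos] at hn
  have := hb n
  nlinarith
end

section
/- Let A ⊆ B(H) be an operator algebra with the complete reduction property. If a closed A-submodule V ⊆ H is uniquely complemented in the lattice of closed A-submodules by W, then the projection onto V along W lies in the center of A'' (it commutes with both A′ and A''). -/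
/-- The key step: a complemented family of graphs of `n • S` forces `S = 0` as soon as there are
no nonzero module maps from `ker p` to `range p`. -/
theorem aux_graph_zero
    {H : Type*} [NormedAddCommGroup H] [InnerProductSpace ℂ H] [CompleteSpace H]
    (A : Subalgebra ℂ (H →L[ℂ] H))
    (hcrp : ∀ V : Submodule ℂ (lp (fun _ : ℕ => H) 2), IsClosed (V : Set (lp (fun _ : ℕ => H) 2)) →
      (∀ a ∈ A, ∀ ξ ∈ V, ∀ η : lp (fun _ : ℕ => H) 2, (∀ i, η i = a (ξ i)) → η ∈ V) →
      ∃ W : Submodule ℂ (lp (fun _ : ℕ => H) 2), IsClosed (W : Set (lp (fun _ : ℕ => H) 2)) ∧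
        (∀ a ∈ A, ∀ ξ ∈ W, ∀ η : lp (fun _ : ℕ => H) 2, (∀ i, η i = a (ξ i)) → η ∈ W) ∧
        V ⊓ W = ⊥ ∧ V ⊔ W = ⊤)
    (p : H →L[ℂ] H) (hpp : ∀ x, p (p x) = p x)
    (hpa : ∀ a ∈ A, ∀ x, p (a x) = a (p x))
    (hno : ∀ T : H →L[ℂ] H, (∀ a ∈ A, ∀ x, T (a x) = a (T x)) → ∀ x, p (T (x - p x)) = 0)
    (S : H →L[ℂ] H) (hSa : ∀ a ∈ A, ∀ x, S (a x) = a (S x))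
    (hpS : ∀ x, p (S x) = 0) (hSp : ∀ x, S (p x) = S x) (v : H) (hv : p v = v) : S v = 0 := by
  have hSS : ∀ x, S (S x) = 0 := fun x => by rw [← hSp (S x), hpS, map_zero]
  let M : Submodule ℂ (lp (fun _ : ℕ => H) 2) :=
    { carrier := {ξ | ∀ n : ℕ, ξ n - p (ξ n) = (n : ℂ) • S (ξ n)}
      add_mem' := by
        intro a b ha hb n
        have h1 := ha n
        have h2 := hb n
        simp only [lp.coeFn_add, Pi.add_apply, map_add, smul_add]
        rw [← h1, ← h2]; abel
      zero_mem' := by intro n; simp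
      smul_mem' := by
        intro c a ha n
        have h1 := ha n
        simp only [lp.coeFn_smul, Pi.smul_apply, map_smul]
        rw [smul_comm, ← h1, smul_sub] }
  have hM : ∀ ξ, ξ ∈ M ↔ ∀ n : ℕ, ξ n - p (ξ n) = (n : ℂ) • S (ξ n) := fun ξ => Iff.rfl
  have hMc : IsClosed (M : Set (lp (fun _ : ℕ => H) 2)) := by
    have : (M : Set (lp (fun _ : ℕ => H) 2)) =
        ⋂ n : ℕ, {ξ | ξ n - p (ξ n) = (n : ℂ) • S (ξ n)} := by
      ext ξ; simp [hM]
    rw [this]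
    refine isClosed_iInter fun n => ?_
    have he : Continuous (fun ξ : lp (fun _ : ℕ => H) 2 => ξ n) :=
      (lp.lipschitzWith_one_eval 2 n).continuous
    exact isClosed_eq (he.sub (p.continuous.comp he)) ((S.continuous.comp he).const_smul _)
  obtain ⟨K, hKc, hKinv, h1, h2⟩ := hcrp M hMc (by
    intro a ha ξ hξ η hη n
    have := hξ n
    rw [hη, hpa a ha, hSa a ha, ← map_sub, this, map_smul])
  have hMinv : ∀ a ∈ A, ∀ ξ ∈ M, ∀ η : lp (fun _ : ℕ => H) 2, (∀ i, η i = a (ξ i)) → η ∈ M := by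
    intro a ha ξ hξ η hη n
    have := hξ n
    rw [hη, hpa a ha, hSa a ha, ← map_sub, this, map_smul]
  have hc : Submodule.IsTopCompl M K :=
    Submodule.isTopCompl_iff_isCompl_isClosed.2 ⟨
      ⟨disjoint_iff.2 h1, codisjoint_iff.2 h2⟩, hMc, hKc⟩
  let Q := M.projectionL K hc
  have hQM : ∀ ξ, Q ξ ∈ M := fun ξ => Submodule.projectionL_apply_mem hc ξ
  have hQfix : ∀ ξ ∈ M, Q ξ = ξ := fun ξ h => Submodule.projectionL_apply_left hc ⟨ξ, h⟩
  have hQker : ∀ ξ ∈ K, Q ξ = 0 := fun ξ h => Submodule.projectionL_apply_right hc ⟨ξ, h⟩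
  have hQK : ∀ ξ, ξ - Q ξ ∈ K := fun ξ => by
    have : Q (ξ - Q ξ) = 0 := by rw [map_sub, hQfix _ (hQM ξ), sub_self]
    exact (Submodule.projectionL_apply_eq_zero_iff hc).1 this
  let act : (H →L[ℂ] H) → lp (fun _ : ℕ => H) 2 → lp (fun _ : ℕ => H) 2 := fun a ξ =>
    lp.mapCLM 2 (fun _ : ℕ => a) (norm_nonneg a) (fun _ => le_rfl) ξ
  have hact : ∀ a ξ i, act a ξ i = a (ξ i) := fun a ξ i => rfl
  have hQa : ∀ a ∈ A, ∀ ξ η : lp (fun _ : ℕ => H) 2, (∀ i, η i = a (ξ i)) →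
      ∀ i, Q η i = a (Q ξ i) := by
    intro a ha ξ η hη i
    have e : η = act a (Q ξ) + act a (ξ - Q ξ) := by
      ext j
      rw [lp.coeFn_add, Pi.add_apply, hact, hact, hη, ← map_add, lp.coeFn_sub, Pi.sub_apply,
        add_sub_cancel]
    rw [e, map_add, hQfix _ (hMinv a ha _ (hQM ξ) _ (hact a _)),
      hQker _ (hKinv a ha _ (hQK ξ) _ (hact a _)), add_zero, hact]
  let P : ℕ → H →L[ℂ] H := fun n =>
    (lp.evalCLM ℂ (fun _ : ℕ => H) 2 n).comp
      (Q.comp (lp.singleContinuousLinearMap ℂ (fun _ : ℕ => H) 2 n))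
  have hP : ∀ n x, P n x = Q (lp.single 2 n x) n := fun n x => rfl
  have hPa : ∀ n, ∀ a ∈ A, ∀ x, P n (a x) = a (P n x) := by
    intro n a ha x
    rw [hP, hP]
    refine hQa a ha _ _ (fun i => ?_) n
    by_cases h : i = n
    · subst h; rw [lp.single_apply_self, lp.single_apply_self]
    · rw [lp.single_apply_ne _ _ _ h, lp.single_apply_ne _ _ _ h, map_zero]
  have hPM : ∀ n x, P n x - p (P n x) = (n : ℂ) • S (P n x) := fun n x => hQM _ n
  have hPv : ∀ n, P n v = v + (n : ℂ) • S v := by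
    intro n
    have hmem : lp.single 2 n (v + (n : ℂ) • S v) ∈ M := by
      intro i
      by_cases h : i = n
      · subst h
        rw [lp.single_apply_self]
        simp [hpS, hSS, hv]
      · rw [lp.single_apply_ne _ _ _ h]; simp
    have e1 : P n (v + (n : ℂ) • S v) = v + (n : ℂ) • S v := by
      rw [hP, hQfix _ hmem, lp.single_apply_self]
    have e2 : p (P n (S v)) = 0 := by
      have := hno (P n) (hPa n) (S v)
      rwa [hpS, sub_zero] at this
    have e3 : p (P n v) = v := by
      have := congrArg p e1
      simpa [e2, hpS, hv] using this
    have e4 := hPM n v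
    rw [← hSp (P n v), e3] at e4
    rw [← e4]; abel
  have hb : ∀ n : ℕ, (n : ℝ) * ‖S v‖ ≤ (‖Q‖ + 1) * ‖v‖ := by
    intro n
    have b1 : ‖P n v‖ ≤ ‖Q‖ * ‖v‖ := by
      rw [hP]
      refine (lp.norm_apply_le_norm (by norm_num) _ n).trans ((Q.le_opNorm _).trans ?_)
      rw [lp.norm_single (by norm_num)]
    have b2 : (n : ℂ) • S v = P n v - v := by rw [hPv]; abel
    have b3 : ‖(n : ℂ) • S v‖ = n * ‖S v‖ := by rw [norm_smul]; simp
    rw [← b3, b2]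
    refine (norm_sub_le _ _).trans ?_
    linarith
  by_contra hne
  have hpos : 0 < ‖S v‖ := norm_pos_iff.2 hne
  obtain ⟨n, hn⟩ := exists_nat_gt ((‖Q‖ + 1) * ‖v‖ / ‖S v‖)
  rw [div_lt_iff₀ hpos] at hn
  linarith [hb n]

/-- for an operator algebra `A ⊆ B(H)` with the complete reduction property,
if the closed submodule `V` is uniquely complemented (among closed submodules) by `W`, then
the projection onto `V` along `W` is central in `A''`: it commutes with every element of
the commutant `A′` and of the bicommutant `A''`. -/
theorem unique_complement_projection_central
    {H : Type*} [NormedAddCommGroup H] [InnerProductSpace ℂ H] [CompleteSpace H]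
    (A : Subalgebra ℂ (H →L[ℂ] H))
    (hcrp : ∀ V : Submodule ℂ (lp (fun _ : ℕ => H) 2), IsClosed (V : Set (lp (fun _ : ℕ => H) 2)) →
      (∀ a ∈ A, ∀ ξ ∈ V, ∀ η : lp (fun _ : ℕ => H) 2, (∀ i, η i = a (ξ i)) → η ∈ V) →
      ∃ W : Submodule ℂ (lp (fun _ : ℕ => H) 2), IsClosed (W : Set (lp (fun _ : ℕ => H) 2)) ∧
        (∀ a ∈ A, ∀ ξ ∈ W, ∀ η : lp (fun _ : ℕ => H) 2, (∀ i, η i = a (ξ i)) → η ∈ W) ∧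
        V ⊓ W = ⊥ ∧ V ⊔ W = ⊤)
    (V W : Submodule ℂ H)
    (hVc : IsClosed (V : Set H)) (hWc : IsClosed (W : Set H))
    (hVinv : ∀ a ∈ A, ∀ x ∈ V, a x ∈ V) (hWinv : ∀ a ∈ A, ∀ x ∈ W, a x ∈ W)
    (hmeet : V ⊓ W = ⊥) (hjoin : V ⊔ W = ⊤)
    (huniq : ∀ W' : Submodule ℂ H, IsClosed (W' : Set H) → (∀ a ∈ A, ∀ x ∈ W', a x ∈ W') →
      V ⊓ W' = ⊥ → V ⊔ W' = ⊤ → W' = W)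
    (p : H →L[ℂ] H) (hp : IsIdempotentElem p)
    (hfix : ∀ x ∈ V, p x = x) (hker : ∀ x ∈ W, p x = 0) :
    (∀ T : H →L[ℂ] H, (∀ a ∈ A, Commute T a) → Commute p T) ∧
    (∀ S : H →L[ℂ] H,
      (∀ T : H →L[ℂ] H, (∀ a ∈ A, Commute T a) → Commute S T) → Commute p S) := by
  have hdec : ∀ x, ∃ v ∈ V, ∃ w ∈ W, v + w = x := fun x =>
    Submodule.mem_sup.1 (by rw [hjoin]; trivial)
  have hpV : ∀ x, p x ∈ V := by
    intro x
    obtain ⟨v, hv, w, hw, rfl⟩ := hdec x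
    rwa [map_add, hfix v hv, hker w hw, add_zero]
  have hpW : ∀ x, x - p x ∈ W := by
    intro x
    obtain ⟨v, hv, w, hw, rfl⟩ := hdec x
    rwa [map_add, hfix v hv, hker w hw, add_zero, add_sub_cancel_left]
  have hpp : ∀ x, p (p x) = p x := fun x => hfix _ (hpV x)
  have hpa : ∀ a ∈ A, ∀ x, p (a x) = a (p x) := by
    intro a ha x
    obtain ⟨v, hv, w, hw, rfl⟩ := hdec x
    simp [hfix v hv, hker w hw, hfix _ (hVinv a ha v hv), hker _ (hWinv a ha w hw)]
  have hno : ∀ T : H →L[ℂ] H, (∀ a ∈ A, ∀ x, T (a x) = a (T x)) →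
      ∀ x, p (T (x - p x)) = 0 := by
    intro T hT
    obtain ⟨B, hB⟩ : ∃ B : H →L[ℂ] H, ∀ x, B x = p (T (x - p x)) :=
      ⟨p.comp (T.comp (ContinuousLinearMap.id ℂ H - p)), fun x => rfl⟩
    have hBa : ∀ a ∈ A, ∀ x, B (a x) = a (B x) := by
      intro a ha x
      rw [hB, hB, hpa a ha, ← map_sub, hT a ha, hpa a ha]
    have hpB : ∀ x, p (B x) = B x := fun x => by rw [hB, hpp]
    have hBp : ∀ x, B (p x) = 0 := fun x => by rw [hB, hpp, sub_self, map_zero, map_zero]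
    have hBB : ∀ x, B (B x) = 0 := fun x => by rw [← hpB x, hBp]
    have hW' : LinearMap.ker ((p - B : H →L[ℂ] H) : H →ₗ[ℂ] H) = W := by
      have hm : ∀ x, x ∈ LinearMap.ker ((p - B : H →L[ℂ] H) : H →ₗ[ℂ] H) ↔ p x = B x := by
        intro x
        simp [LinearMap.mem_ker, sub_eq_zero]
      apply huniq
      · exact (p - B).isClosed_ker
      · intro a ha x hx
        rw [hm] at hx ⊢
        rw [hpa a ha, hBa a ha, hx]
      · rw [eq_bot_iff]
        rintro x ⟨hxV, hx⟩
        have hx := (hm x).1 hx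
        have h1 := hfix x hxV
        have h2 := hBp x
        rw [h1] at h2
        rw [Submodule.mem_bot, ← h1, hx, h2]
      · rw [eq_top_iff]
        intro x _
        refine Submodule.mem_sup.2 ⟨p x - B x, ?_, x - p x + B x, ?_, by abel⟩
        · have := hpV (p x - B x)
          rwa [map_sub, hpp, hpB] at this
        · rw [hm]
          simp [hpp, hpB, hBp, hBB]
    intro x
    have h1 : x - p x ∈ LinearMap.ker ((p - B : H →L[ℂ] H) : H →ₗ[ℂ] H) := by
      rw [hW']; exact hpW x
    have h2 : p (x - p x) - B (x - p x) = 0 := h1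
    rw [hker _ (hpW x), map_sub, hBp, sub_zero, zero_sub, neg_eq_zero] at h2
    rw [← hB, h2]
  have hmain : ∀ T : H →L[ℂ] H, (∀ a ∈ A, Commute T a) → Commute p T := by
    intro T hTc
    have hT : ∀ a ∈ A, ∀ x, T (a x) = a (T x) := fun a ha x =>
      DFunLike.congr_fun (hTc a ha).eq x
    obtain ⟨S, hS⟩ : ∃ S : H →L[ℂ] H, ∀ x, S x = T (p x) - p (T (p x)) :=
      ⟨(ContinuousLinearMap.id ℂ H - p).comp (T.comp p), fun x => rfl⟩
    have key := aux_graph_zero A hcrp p hpp hpa hno S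
      (fun a ha x => by rw [hS, hS, hpa a ha, hT a ha, hpa a ha, map_sub])
      (fun x => by rw [hS, map_sub, hpp, sub_self])
      (fun x => by rw [hS, hS, hpp])
    refine ContinuousLinearMap.ext fun x => ?_
    change p (T x) = T (p x)
    have h1 := key (p x) (hpp x)
    rw [hS, hpp, sub_eq_zero] at h1
    have h2 := hno T hT x
    rw [map_sub, map_sub, sub_eq_zero] at h2
    rw [h2, ← h1]
  refine ⟨hmain, fun S hS => ?_⟩
  exact (hS p fun a ha => ContinuousLinearMap.ext fun x => hpa a ha x).symm
end
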